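/- There exists a uniquely ergodic C^∞ diffeomorphism T of the torus 𝕋² whose unique invariant Borel probability measure is the Haar–Lebesgue measure λ, such that T is measure-theoretically isomorphic to the rotation of the circle by some irrational number and the upper topological slow entropy of T with respect to the logarithmic scaling family a^{ln}_m(t) = (ln m)^t equals 1. -/

import Mathlib

open MeasureTheory Filter Set
open scoped Topology ENNReal NNReal

noncomputable section

/-- The Bowen metric `d_n^T(x,y) = max_{0 ≤ i ≤ n-1} d(T^i x, T^i y)`. -/
def bowenDist {X : Type*} [PseudoMetricSpace X] (T : X → X) (n : ℕ) (x y : X) : ℝ :=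
  (((Finset.range n).sup fun i => nndist (T^[i] x) (T^[i] y)) : ℝ≥0)

/-- `N_{d_n^T}(ε)`: the minimal number of `(ε,n)`-Bowen balls of `T` needed to cover the
whole space. -/
def bowenCoverNum {X : Type*} [PseudoMetricSpace X] (T : X → X) (n : ℕ) (ε : ℝ) : ℕ :=
  sInf {N : ℕ | ∃ F : Finset X, F.card = N ∧ ∀ y : X, ∃ x ∈ F, bowenDist T n x y < ε}

/-- `N(ε)`: the supremum (`0` if the set is empty, by the `Real.sSup` convention) of all
`t > 0` such that `limsup_n N_{d_n^T}(ε) / a_n(t) > 0`. -/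
def topSlowEntFun {X : Type*} [PseudoMetricSpace X] (T : X → X) (a : ℕ → ℝ → ℝ) (ε : ℝ) : ℝ :=
  sSup {t : ℝ | 0 < t ∧
    0 < Filter.atTop.limsup fun n => (bowenCoverNum T n ε : ℝ≥0∞) / ENNReal.ofReal (a n t)}

/-- The upper topological slow entropy of `T` with respect to the scaling family `a`
equals `E`, i.e. `N(ε) → E` as `ε → 0⁺`. -/
def HasUpperTopSlowEntropy {X : Type*} [PseudoMetricSpace X] (T : X → X)
    (a : ℕ → ℝ → ℝ) (E : ℝ) : Prop :=
  Filter.Tendsto (topSlowEntFun T a) (𝓝[>] (0 : ℝ)) (𝓝 E)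

/-- The circle `𝕋¹ = ℝ/ℤ` with its quotient metric and Haar–Lebesgue probability
measure `volume`. -/
abbrev Torus1 : Type := AddCircle (1 : ℝ)

/-- The 2-torus `𝕋² = ℝ²/ℤ²`, with its quotient (flat) metric, its Borel σ-algebra and
its Haar–Lebesgue probability measure `volume`. -/
abbrev Torus2 : Type := AddCircle (1 : ℝ) × AddCircle (1 : ℝ)

/-- Canonical projection `ℝ² → 𝕋²`. -/
def torusProj : ℝ × ℝ → Torus2 := fun p => ((p.1 : Torus1), (p.2 : Torus1))

/-- `F : ℝ² → ℝ²` is a lift of `T : 𝕋² → 𝕋²`. -/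
def IsLiftOf (F : ℝ × ℝ → ℝ × ℝ) (T : Torus2 → Torus2) : Prop :=
  ∀ p, torusProj (F p) = T (torusProj p)

/-- `T` is a `C^k` diffeomorphism of the torus: it is a bijection and both `T` and `T⁻¹`
admit `C^k` lifts to the universal cover `ℝ²`. -/
def IsCkTorusDiffeo (k : ℕ∞) (T : Torus2 → Torus2) : Prop :=
  Function.Bijective T ∧
  (∃ F : ℝ × ℝ → ℝ × ℝ, ContDiff ℝ k F ∧ IsLiftOf F T) ∧
  (∃ G : ℝ × ℝ → ℝ × ℝ, ContDiff ℝ k G ∧ IsLiftOf G (Function.invFun T))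

/-- `T` is weakly mixing w.r.t. the measure `μ`: `T × T` is ergodic for `μ × μ`. -/
def WeaklyMixing {X : Type*} [MeasurableSpace X] (T : X → X) (μ : Measure X) : Prop :=
  Ergodic (fun p : X × X => (T p.1, T p.2)) (μ.prod μ)

/-- `T` is uniquely ergodic with the Haar–Lebesgue measure `volume` as its unique
invariant Borel probability measure. -/
def UniquelyErgodicWithVolume (T : Torus2 → Torus2) : Prop :=
  MeasurePreserving T volume volume ∧
  ∀ μ : Measure Torus2, IsProbabilityMeasure μ → MeasurePreserving T μ μ → μ = volume

/-- `T` (preserving the Haar measure `volume` on `𝕋²`) is measure-theoretically isomorphic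
to the rotation of the circle `𝕋¹ = ℝ/ℤ` by some irrational number `α`. -/
def IsoToIrrationalRotation (T : Torus2 → Torus2) : Prop :=
  ∃ α : ℝ, Irrational α ∧
    ∃ (A : Set Torus2) (B : Set Torus1) (ψ : Torus2 → Torus1) (φ : Torus1 → Torus2),
      MeasurableSet A ∧ MeasurableSet B ∧
      volume Aᶜ = 0 ∧ volume Bᶜ = 0 ∧
      Set.MapsTo T A A ∧ Set.MapsTo (fun y : Torus1 => y + (α : Torus1)) B B ∧
      Measurable ψ ∧ Measurable φ ∧
      Set.MapsTo ψ A B ∧ Set.MapsTo φ B A ∧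
      (∀ x ∈ A, φ (ψ x) = x) ∧ (∀ y ∈ B, ψ (φ y) = y) ∧
      Measure.map ψ volume = volume ∧
      (∀ x ∈ A, ψ (T x) = ψ x + (α : Torus1))

/-- A finite measurable partition of `X`. -/
structure FinMeasPartition (X : Type*) [MeasurableSpace X] where
  card : ℕ
  piece : Fin card → Set X
  measurable : ∀ i, MeasurableSet (piece i)
  disjoint : Pairwise fun i j => Disjoint (piece i) (piece j)
  cover : (⋃ i, piece i) = Set.univ

open Classical in
/-- The normalized Hamming distance between the length-`n` `P`-codings of the `T`-orbits
of `x` and `y` (the codings differ at time `k` iff `T^k x` and `T^k y` lie in different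
pieces of `P`). -/
def codeHammingDist {X : Type*} [MeasurableSpace X] (T : X → X) (P : FinMeasPartition X)
    (n : ℕ) (x y : X) : ℝ :=
  (((Finset.range n).filter fun k =>
      ¬ ∃ i, T^[k] x ∈ P.piece i ∧ T^[k] y ∈ P.piece i).card : ℝ) / n

/-- `S^H_P(T,n,ε)`: the minimal number of `(ε,n)`-Hamming balls whose union has
`μ`-measure greater than `1 - ε`. -/
def hammingCoverNum {X : Type*} [MeasurableSpace X] (μ : Measure X) (T : X → X)
    (P : FinMeasPartition X) (n : ℕ) (ε : ℝ) : ℕ :=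
  sInf {N : ℕ | ∃ F : Finset X, F.card = N ∧
    ENNReal.ofReal (1 - ε) < μ (⋃ x ∈ F, {y | codeHammingDist T P n x y < ε})}

/-- For a fixed partition `P` and `ε > 0`: the supremum (with the `Real.sSup` convention,
`0` if the set is empty) of all `t > 0` with `limsup_n S^H_P(T,n,ε)/a_n(t) > 0`. -/
def measSlowEntFun {X : Type*} [MeasurableSpace X] (μ : Measure X) (T : X → X)
    (a : ℕ → ℝ → ℝ) (P : FinMeasPartition X) (ε : ℝ) : ℝ :=
  sSup {t : ℝ | 0 < t ∧
    0 < Filter.atTop.limsup fun n =>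
      (hammingCoverNum μ T P n ε : ℝ≥0∞) / ENNReal.ofReal (a n t)}

/-- The upper measure-theoretic slow entropy of `(T,μ)` w.r.t. the scaling family `a`
equals `E`: for every finite measurable partition the limit as `ε → 0⁺` exists, and the
least upper bound over all partitions of these limits is `E`. -/
def HasUpperMeasSlowEntropy {X : Type*} [MeasurableSpace X] (μ : Measure X) (T : X → X)
    (a : ℕ → ℝ → ℝ) (E : ℝ) : Prop :=
  (∀ P : FinMeasPartition X, ∃ e : ℝ,
      Filter.Tendsto (measSlowEntFun μ T a P) (𝓝[>] (0 : ℝ)) (𝓝 e)) ∧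
  IsLUB {e : ℝ | ∃ P : FinMeasPartition X,
      Filter.Tendsto (measSlowEntFun μ T a P) (𝓝[>] (0 : ℝ)) (𝓝 e)} E

/-- `Γ_r(x) = (Γ(x^{1/r} + 1))^r`, where `Γ` is the Euler Gamma function. -/
def GammaR (r : ℕ) (x : ℝ) : ℝ := (Real.Gamma (x ^ ((r : ℝ)⁻¹) + 1)) ^ r

/-- The inverse of `Γ_r` on `[1,∞)` (where `Γ_r` is strictly increasing with `Γ_r 1 = 1`). -/
def GammaRInv (r : ℕ) (y : ℝ) : ℝ := sSup {x : ℝ | 1 ≤ x ∧ GammaR r x ≤ y}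

/-- The intermediate scaling family `a^{int1,r}_m(t) = m^(t / Γ_r⁻¹(ln m / ln q₁))`. -/
def intScale1 (r q₁ : ℕ) (m : ℕ) (t : ℝ) : ℝ :=
  (m : ℝ) ^ (t / GammaRInv r (Real.log m / Real.log q₁))

/-- The intermediate scaling family
`a^{int2,r}_m(t) = m^(t / (Γ_r⁻¹(ln m / ln q₁))^((r-2)/r))`. -/
def intScale2 (r q₁ : ℕ) (m : ℕ) (t : ℝ) : ℝ :=
  (m : ℝ) ^ (t / GammaRInv r (Real.log m / Real.log q₁) ^ (((r : ℝ) - 2) / (r : ℝ)))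

/-- The logarithmic scaling family `a^{ln}_m(t) = (ln m)^t`. -/
def logScale (m : ℕ) (t : ℝ) : ℝ := Real.log m ^ t

/-- The polynomial scaling family `a^{pol}_m(t) = m^t`. -/
def polScale (m : ℕ) (t : ℝ) : ℝ := (m : ℝ) ^ t

end

/-!
Anosov–Katok approximation by conjugation. Put
`h_n (x, y) = (x - β_n y / N_n, y + N_n x - β_n y)`, where `β_n` is a smooth periodic function that
agrees with `y - 1 / 2` off the `1 / L_n`-neighbourhood of the integers, and
`H_{n+1} = H_n ∘ h_n`. Since `h_n` carries the translation by `(t, 0)` to the one by `(t, N_n t)`,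
which is nearly trivial for `t = 1 / N_{n+1}`, the conjugates `T_n` by `H_n` of the horizontal
translations by `α_n = ∑_{k ≤ n} 1 / N_k` converge in `C^∞` as soon as `N_{n+1}` is huge compared
to the derivatives of `H_n`.

* All orbits of `T_{n+1}` are, up to a shift of time, uniformly close to each other, so `T` has at
  most one invariant probability measure.
* On the plateau of the sawtooth, `h_n⁻¹` turns the second coordinate into the first one modulo
  `1 / N_n`; hence the first coordinates of `H_n⁻¹` converge almost everywhere, and they determine
  the point. Their limit is the isomorphism with the rotation by `α = lim α_n`.
* Up to time `N_{n+2} = 2 ^ L_n`, the `L_n / 2` points of height `2k / L_n` in the coordinates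
  `H_{n+1}` separate by a constant, because `h_n` shears any height difference `w ≥ 2 / L_n` to
  `1 / 2`. Conversely a grid of at most `C_ε L_n ^ (1 + δ)` points is `ε`-dense for the Bowen metric
  at all times between `N_{n+2}` and the next such scale. As `L_n` is comparable to
  `log N_{n+2}`, the entropy for the scale `(log m) ^ t` is `1`.
-/

open scoped ContDiff

noncomputable section

section PolyBoundedDerivs

variable {E F G : Type*} [NormedAddCommGroup E] [NormedSpace ℝ E] [NormedAddCommGroup F]
  [NormedSpace ℝ F] [NormedAddCommGroup G] [NormedSpace ℝ G]

theorem iteratedFDeriv_sub_const {k : ℕ} (hk : k ≠ 0) (f : E → F) (c : F) :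
    iteratedFDeriv ℝ k (fun x => f x - c) = iteratedFDeriv ℝ k f := by
  obtain ⟨j, rfl⟩ := Nat.exists_eq_add_one_of_ne_zero hk
  have hderiv : (fderiv ℝ fun x => f x - c) = fderiv ℝ f := funext fun x => fderiv_sub_const c
  funext x
  rw [iteratedFDeriv_succ_eq_comp_right, iteratedFDeriv_succ_eq_comp_right, hderiv]

theorem norm_iteratedFDeriv_comp_le_of_ne_zero {g : F → G} {f : E → F} {n : ℕ} (hn : n ≠ 0)
    (hg : ContDiff ℝ ∞ g) (hf : ContDiff ℝ ∞ f) {x : E} {C D : ℝ}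
    (hC : ∀ i, i ≠ 0 → i ≤ n → ‖iteratedFDeriv ℝ i g (f x)‖ ≤ C)
    (hD : ∀ i, i ≠ 0 → i ≤ n → ‖iteratedFDeriv ℝ i f x‖ ≤ D ^ i) :
    ‖iteratedFDeriv ℝ n (g ∘ f) x‖ ≤ n.factorial * C * D ^ n := by
  -- Subtracting `g (f x)` from `g` kills its value at `f x` and changes no derivative.
  have hcomp : iteratedFDeriv ℝ n ((fun y => g y - g (f x)) ∘ f) = iteratedFDeriv ℝ n (g ∘ f) :=
    iteratedFDeriv_sub_const hn (g ∘ f) (g (f x))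
  rw [← hcomp]
  refine norm_iteratedFDeriv_comp_le (hg.sub contDiff_const) hf (by exact_mod_cast le_top) x
    (fun i hi => ?_) fun i hi => hD i (by omega)
  rcases eq_or_ne i 0 with rfl | hi0
  · simpa using (norm_nonneg _).trans (hC n hn le_rfl)
  · rw [iteratedFDeriv_sub_const hi0]
    exact hC i hi0 hi

/-- Families `f L`, `L ≥ 3`, of smooth maps whose derivatives of each order `k ≥ 1` are bounded by
a power of `L`. Since `L ≥ 3`, multiplicative constants are absorbed in the exponent. -/
def HasPolyBoundedDerivs (f : ℕ → E → F) : Prop :=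
  (∀ L, 3 ≤ L → ContDiff ℝ ∞ (f L)) ∧
    ∀ k, k ≠ 0 → ∃ p : ℕ, ∀ L, 3 ≤ L → ∀ x, ‖iteratedFDeriv ℝ k (f L) x‖ ≤ (L : ℝ) ^ p

theorem exists_forall_le_natCast_pow (C : ℝ) : ∃ p : ℕ, ∀ L : ℕ, 3 ≤ L → C ≤ (L : ℝ) ^ p := by
  obtain ⟨p, hp⟩ := pow_unbounded_of_one_lt C (by norm_num : (1 : ℝ) < 3)
  refine ⟨p, fun L hL => hp.le.trans ?_⟩
  gcongr
  exact_mod_cast hL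

theorem natCast_pow_le_pow_of_le {L p q : ℕ} (hL : 3 ≤ L) (hpq : p ≤ q) :
    (L : ℝ) ^ p ≤ (L : ℝ) ^ q :=
  pow_le_pow_right₀ (by exact_mod_cast (by omega : 1 ≤ L)) hpq

namespace HasPolyBoundedDerivs

theorem exists_uniform {f : ℕ → E → F} (hf : HasPolyBoundedDerivs f) (k : ℕ) :
    ∃ p : ℕ, ∀ j, j ≠ 0 → j ≤ k → ∀ L, 3 ≤ L → ∀ x,
      ‖iteratedFDeriv ℝ j (f L) x‖ ≤ (L : ℝ) ^ p := by
  choose! p hp using hf.2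
  refine ⟨(Finset.range (k + 1)).sup p, fun j hj hjk L hL x => (hp j hj L hL x).trans ?_⟩
  exact natCast_pow_le_pow_of_le hL (Finset.le_sup (Finset.mem_range.2 (by omega)))

theorem of_bound {f : ℕ → E → F} (hf : ∀ L, 3 ≤ L → ContDiff ℝ ∞ (f L))
    (hbound : ∀ k, k ≠ 0 → ∃ (C : ℝ) (p : ℕ), ∀ L, 3 ≤ L → ∀ x,
      ‖iteratedFDeriv ℝ k (f L) x‖ ≤ C * (L : ℝ) ^ p) :
    HasPolyBoundedDerivs f := by
  refine ⟨hf, fun k hk => ?_⟩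
  obtain ⟨C, p, h⟩ := hbound k hk
  obtain ⟨q, hq⟩ := exists_forall_le_natCast_pow C
  refine ⟨q + p, fun L hL x => (h L hL x).trans ?_⟩
  rw [pow_add]
  gcongr
  exact hq L hL

theorem constFamily {f : ℕ → E → F} (hf : HasPolyBoundedDerivs f) {L : ℕ} (hL : 3 ≤ L) :
    HasPolyBoundedDerivs fun _ => f L := by
  refine .of_bound (fun _ _ => hf.1 L hL) fun k hk => ?_
  obtain ⟨p, hp⟩ := hf.2 k hk
  exact ⟨(L : ℝ) ^ p, 0, fun _ _ x => by simpa using hp L hL x⟩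

theorem comp {g : ℕ → F → G} {f : ℕ → E → F} (hg : HasPolyBoundedDerivs g)
    (hf : HasPolyBoundedDerivs f) : HasPolyBoundedDerivs fun L => g L ∘ f L := by
  refine .of_bound (fun L hL => (hg.1 L hL).comp (hf.1 L hL)) fun k hk => ?_
  obtain ⟨p, hp⟩ := hg.exists_uniform k
  obtain ⟨q, hq⟩ := hf.exists_uniform k
  refine ⟨k.factorial, p + q * k, fun L hL x => ?_⟩
  have hLq : 1 ≤ (L : ℝ) ^ q := by simpa using natCast_pow_le_pow_of_le hL (Nat.zero_le q)
  refine (norm_iteratedFDeriv_comp_le_of_ne_zero hk (hg.1 L hL) (hf.1 L hL)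
    (fun i hi hik => hp i hi hik L hL _)
    fun i hi hik => (hq i hi hik L hL x).trans (le_self_pow₀ hLq hi)).trans_eq ?_
  ring

theorem add {f g : ℕ → E → F} (hf : HasPolyBoundedDerivs f) (hg : HasPolyBoundedDerivs g) :
    HasPolyBoundedDerivs fun L x => f L x + g L x := by
  refine .of_bound (fun L hL => (hf.1 L hL).add (hg.1 L hL)) fun k hk => ?_
  obtain ⟨p, hp⟩ := hf.2 k hk
  obtain ⟨q, hq⟩ := hg.2 k hk
  refine ⟨2, p + q, fun L hL x => ?_⟩
  have hk_top : (k : ℕ∞ω) ≤ (∞ : ℕ∞ω) := by exact_mod_cast le_top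
  have hadd : iteratedFDeriv ℝ k (fun x => f L x + g L x) x =
      iteratedFDeriv ℝ k (f L) x + iteratedFDeriv ℝ k (g L) x :=
    iteratedFDeriv_add_apply ((hf.1 L hL).of_le hk_top).contDiffAt
      ((hg.1 L hL).of_le hk_top).contDiffAt
  rw [hadd, two_mul]
  exact norm_add_le_of_le ((hp L hL x).trans (natCast_pow_le_pow_of_le hL (by omega)))
    ((hq L hL x).trans (natCast_pow_le_pow_of_le hL (by omega)))

theorem continuousLinearMap {A : ℕ → E →L[ℝ] F} {p : ℕ}
    (hA : ∀ L, 3 ≤ L → ‖A L‖ ≤ (L : ℝ) ^ p) : HasPolyBoundedDerivs fun L x => A L x := by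
  refine ⟨fun L _ => (A L).contDiff, fun k hk => ⟨p, fun L hL x => ?_⟩⟩
  obtain ⟨j, rfl⟩ := Nat.exists_eq_succ_of_ne_zero hk
  have hderiv : (fderiv ℝ fun x => A L x) = fun _ => A L := funext fun x => (A L).fderiv
  rw [Nat.succ_eq_add_one, ← norm_iteratedFDeriv_fderiv, hderiv]
  rcases eq_or_ne j 0 with rfl | hj
  · simpa using hA L hL
  · simp [iteratedFDeriv_const_of_ne hj]

theorem const (c : F) : HasPolyBoundedDerivs fun (_ : ℕ) (_ : E) => c :=
  ⟨fun _ _ => contDiff_const, fun k hk => ⟨0, fun L _ x => by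
    simp [iteratedFDeriv_const_of_ne hk]⟩⟩

theorem clm_comp (A : F →L[ℝ] G) {f : ℕ → E → F} (hf : HasPolyBoundedDerivs f) :
    HasPolyBoundedDerivs fun L x => A (f L x) := by
  obtain ⟨p, hp⟩ := exists_forall_le_natCast_pow ‖A‖
  exact (continuousLinearMap (A := fun _ => A) hp).comp hf

theorem id : HasPolyBoundedDerivs fun (_ : ℕ) (x : E) => x :=
  continuousLinearMap (A := fun _ => ContinuousLinearMap.id ℝ E) (p := 0) fun _ _ => by
    simpa using ContinuousLinearMap.norm_id_le

theorem const_mul (c : ℝ) {f : ℕ → E → ℝ} (hf : HasPolyBoundedDerivs f) :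
    HasPolyBoundedDerivs fun L x => c * f L x :=
  hf.clm_comp (c • ContinuousLinearMap.id ℝ ℝ)

theorem sub {f g : ℕ → E → F} (hf : HasPolyBoundedDerivs f) (hg : HasPolyBoundedDerivs g) :
    HasPolyBoundedDerivs fun L x => f L x - g L x := by
  simpa [sub_eq_add_neg] using hf.add (hg.clm_comp (-ContinuousLinearMap.id ℝ F))

theorem prodMk {f : ℕ → E → F} {g : ℕ → E → G} (hf : HasPolyBoundedDerivs f)
    (hg : HasPolyBoundedDerivs g) : HasPolyBoundedDerivs fun L x => (f L x, g L x) := by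
  simpa using (hf.clm_comp (ContinuousLinearMap.inl ℝ F G)).add
    (hg.clm_comp (ContinuousLinearMap.inr ℝ F G))

theorem fst {f : ℕ → E → F × G} (hf : HasPolyBoundedDerivs f) :
    HasPolyBoundedDerivs fun L x => (f L x).1 :=
  hf.clm_comp (ContinuousLinearMap.fst ℝ F G)

theorem snd {f : ℕ → E → F × G} (hf : HasPolyBoundedDerivs f) :
    HasPolyBoundedDerivs fun L x => (f L x).2 :=
  hf.clm_comp (ContinuousLinearMap.snd ℝ F G)

end HasPolyBoundedDerivs

theorem iteratedFDeriv_comp_prodMk_right {f : E × F → G} (hf : ContDiff ℝ ∞ f) (k : ℕ) (y : F)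
    (x : E) : iteratedFDeriv ℝ k (fun x => f (x, y)) x =
      (iteratedFDeriv ℝ k f (x, y)).compContinuousLinearMap
        fun _ => ContinuousLinearMap.inl ℝ E F := by
  have hshift : (fun x => f (x, y)) =
      (fun q => f (q + ((0 : E), y))) ∘ ContinuousLinearMap.inl ℝ E F := by
    funext x; simp
  have hcomp : ContDiff ℝ ∞ fun q => f (q + ((0 : E), y)) :=
    hf.comp (contDiff_id.add contDiff_const)
  rw [hshift, ContinuousLinearMap.iteratedFDeriv_comp_right _ hcomp _ (by exact_mod_cast le_top),
    iteratedFDeriv_comp_add_right]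
  simp

theorem norm_iteratedFDeriv_sub_prodMk_le {f : E × F → G} (hf : ContDiff ℝ ∞ f) {k : ℕ} {C : ℝ}
    (hC : ∀ q, ‖iteratedFDeriv ℝ (k + 1) f q‖ ≤ C) (y y' : F) (x : E) :
    ‖iteratedFDeriv ℝ k (fun x => f (x, y') - f (x, y)) x‖ ≤ C * ‖y' - y‖ := by
  have hslice (y : F) : ContDiffAt ℝ k (fun x => f (x, y)) x :=
    ((hf.comp (contDiff_id.prodMk contDiff_const)).of_le (by exact_mod_cast le_top)).contDiffAt
  have hsub : iteratedFDeriv ℝ k (fun x => f (x, y') - f (x, y)) x =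
      (iteratedFDeriv ℝ k f (x, y') - iteratedFDeriv ℝ k f (x, y)).compContinuousLinearMap
        fun _ => ContinuousLinearMap.inl ℝ E F := by
    refine (iteratedFDeriv_sub_apply (hslice y') (hslice y)).trans ?_
    rw [iteratedFDeriv_comp_prodMk_right hf, iteratedFDeriv_comp_prodMk_right hf]
    ext m; simp
  have hmean : ‖iteratedFDeriv ℝ k f (x, y') - iteratedFDeriv ℝ k f (x, y)‖ ≤ C * ‖y' - y‖ := by
    refine (convex_univ.norm_image_sub_le_of_norm_fderiv_le (𝕜 := ℝ) (C := C) (fun q _ =>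
      hf.differentiable_iteratedFDeriv (by exact_mod_cast ENat.natCast_lt_top k) q) (fun q _ => ?_)
      (mem_univ (x, y)) (mem_univ (x, y'))).trans_eq (by simp [Prod.norm_def])
    rw [norm_fderiv_iteratedFDeriv]
    exact hC q
  have hinl : ∏ _i : Fin k, ‖ContinuousLinearMap.inl ℝ E F‖ ≤ 1 :=
    Finset.prod_le_one (fun _ _ => norm_nonneg _)
      fun _ _ => ContinuousLinearMap.norm_inl_le_one ℝ E F
  rw [hsub]
  exact (ContinuousMultilinearMap.norm_compContinuousLinearMap_le _ _).trans
    ((mul_le_of_le_one_right (norm_nonneg _) hinl).trans hmean)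

end PolyBoundedDerivs

section SmoothSawtooth

theorem smoothTransition_iteratedFDeriv_eq_zero {k : ℕ} (hk : k ≠ 0) {x : ℝ}
    (hx : x ∉ Icc (0 : ℝ) 1) : iteratedFDeriv ℝ k Real.smoothTransition x = 0 := by
  have of_eventually_const {c : ℝ} (h : Real.smoothTransition =ᶠ[𝓝 x] fun _ => c) :
      iteratedFDeriv ℝ k Real.smoothTransition x = 0 := by
    rw [(h.iteratedFDeriv ℝ k).eq_of_nhds, iteratedFDeriv_const_of_ne hk, Pi.zero_apply]
  rcases lt_or_ge x 0 with h0 | h0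
  · exact of_eventually_const ((gt_mem_nhds h0).mono fun y hy =>
      Real.smoothTransition.zero_of_nonpos hy.le)
  · exact of_eventually_const ((lt_mem_nhds (not_le.1 fun h1 => hx ⟨h0, h1⟩)).mono fun y hy =>
      Real.smoothTransition.one_of_one_le hy.le)

theorem exists_norm_iteratedFDeriv_smoothTransition_le {k : ℕ} (hk : k ≠ 0) :
    ∃ C, ∀ x, ‖iteratedFDeriv ℝ k Real.smoothTransition x‖ ≤ C :=
  ((Real.smoothTransition.contDiff (n := ⊤)).continuous_iteratedFDeriv
    (by exact_mod_cast le_top)).bounded_above_of_compact_support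
    (.intro isCompact_Icc fun _ => smoothTransition_iteratedFDeriv_eq_zero hk)

theorem bddAbove_range_norm_deriv_smoothTransition :
    BddAbove (range fun x => ‖deriv Real.smoothTransition x‖) := by
  obtain ⟨C, hC⟩ := exists_norm_iteratedFDeriv_smoothTransition_le one_ne_zero
  refine ⟨C, forall_mem_range.2 fun x => ?_⟩
  simpa only [norm_iteratedFDeriv_one, norm_deriv_eq_norm_fderiv] using hC x

theorem hasPolyBoundedDerivs_smoothTransition :
    HasPolyBoundedDerivs fun _ : ℕ => Real.smoothTransition := by
  refine .of_bound (fun _ _ => Real.smoothTransition.contDiff) fun k hk => ?_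
  obtain ⟨C, hC⟩ := exists_norm_iteratedFDeriv_smoothTransition_le hk
  exact ⟨C, 0, fun L _ x => by simpa using hC x⟩

/-- One period of the smooth sawtooth: a smooth interpolation between `y + 1/2` on `y ≤ -1/L` and
`y - 1/2` on `y ≥ 1/L`. -/
def smoothRamp (L : ℕ) (y : ℝ) : ℝ := y + 1 / 2 - Real.smoothTransition ((L * y + 1) / 2)

/-- The smooth sawtooth: the `1`-periodic function equal to `y - 1/2` on `[1/L, 1 - 1/L]` whose
jumps at the integers are smoothed at scale `1/L`. -/
def smoothSawtooth (L : ℕ) (y : ℝ) : ℝ := smoothRamp L (y - round y)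

/-- A constant `C` such that every sawtooth `smoothSawtooth L` is `C * L`-Lipschitz. -/
def sawtoothSlope : ℝ := 1 + ⨆ x, ‖deriv Real.smoothTransition x‖

theorem one_le_sawtoothSlope : 1 ≤ sawtoothSlope :=
  le_add_of_nonneg_right (Real.iSup_nonneg fun _ => norm_nonneg _)

variable {L : ℕ} {y : ℝ}

theorem hasPolyBoundedDerivs_smoothRamp : HasPolyBoundedDerivs smoothRamp := by
  have hmul : HasPolyBoundedDerivs fun (L : ℕ) (y : ℝ) => (L : ℝ) * y :=
    .continuousLinearMap (A := fun L => (L : ℝ) • ContinuousLinearMap.id ℝ ℝ) (p := 1)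
      fun L _ => by simp [norm_smul]
  have harg : HasPolyBoundedDerivs fun (L : ℕ) (y : ℝ) => (L * y + 1) / 2 := by
    simpa [div_eq_inv_mul] using (hmul.add (.const 1)).const_mul 2⁻¹
  exact (HasPolyBoundedDerivs.id.add (.const (1 / 2))).sub
    (hasPolyBoundedDerivs_smoothTransition.comp harg)

theorem smoothRamp_of_one_le (h : 1 ≤ L * y) : smoothRamp L y = y - 1 / 2 := by
  rw [smoothRamp, Real.smoothTransition.one_of_one_le (by linarith)]; ring

theorem smoothRamp_of_le_neg_one (h : L * y ≤ -1) : smoothRamp L y = y + 1 / 2 := by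
  rw [smoothRamp, Real.smoothTransition.zero_of_nonpos (by linarith)]; ring

theorem norm_deriv_smoothRamp_le (hL : 1 ≤ L) (y : ℝ) :
    ‖deriv (smoothRamp L) y‖ ≤ sawtoothSlope * L := by
  have hL' : (1 : ℝ) ≤ L := by exact_mod_cast hL
  have hst : Differentiable ℝ Real.smoothTransition :=
    (Real.smoothTransition.contDiff (n := ⊤)).differentiable (by simp)
  have harg : HasDerivAt (fun w : ℝ => (L * w + 1) / 2) ((L : ℝ) / 2) y := by
    simpa using (((hasDerivAt_id y).const_mul (L : ℝ)).add_const 1).div_const 2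
  have hderiv : HasDerivAt (smoothRamp L)
      (1 - deriv Real.smoothTransition ((L * y + 1) / 2) * (L / 2)) y :=
    ((hasDerivAt_id y).add_const _).sub ((hst _).hasDerivAt.comp y harg)
  have hslope : ‖deriv Real.smoothTransition ((L * y + 1) / 2)‖ ≤
      ⨆ x, ‖deriv Real.smoothTransition x‖ :=
    le_ciSup bddAbove_range_norm_deriv_smoothTransition _
  rw [hderiv.deriv, sawtoothSlope, add_mul, one_mul]
  refine (norm_sub_le _ _).trans (add_le_add (by simpa using hL') ?_)
  rw [norm_mul, Real.norm_of_nonneg (by positivity : (0 : ℝ) ≤ L / 2)]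
  exact mul_le_mul hslope (half_le_self (by positivity)) (by positivity)
    ((norm_nonneg _).trans hslope)

theorem smoothSawtooth_eq_smoothRamp (hL : 3 ≤ L) (n : ℤ) (h : |y - n| < 2 / 3) :
    smoothSawtooth L y = smoothRamp L (y - n) := by
  have hL' : (3 : ℝ) ≤ L := by exact_mod_cast hL
  obtain ⟨hr, hr'⟩ := abs_le.1 (abs_sub_round y)
  obtain ⟨hn, hn'⟩ := abs_lt.1 h
  have hlt : round y - n < 2 := by exact_mod_cast (by linarith : ((round y : ℤ) : ℝ) - n < 2)
  have hgt : -2 < round y - n := by exact_mod_cast (by linarith : -2 < ((round y : ℤ) : ℝ) - n)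
  rw [smoothSawtooth]
  obtain hy | hy | hy : round y = n - 1 ∨ round y = n ∨ round y = n + 1 := by omega
  · rw [hy] at hr hr' ⊢
    push_cast at hr hr' ⊢
    rw [smoothRamp_of_one_le (by nlinarith), smoothRamp_of_le_neg_one (by nlinarith)]; ring
  · rw [hy]
  · rw [hy] at hr hr' ⊢
    push_cast at hr hr' ⊢
    rw [smoothRamp_of_le_neg_one (by nlinarith), smoothRamp_of_one_le (by nlinarith)]; ring

theorem smoothSawtooth_eventuallyEq (hL : 3 ≤ L) (y : ℝ) :
    smoothSawtooth L =ᶠ[𝓝 y] fun w => smoothRamp L (w - round y) := by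
  filter_upwards [Metric.ball_mem_nhds y (by norm_num : (0 : ℝ) < 1 / 7)] with w hw
  rw [Metric.mem_ball, Real.dist_eq] at hw
  refine smoothSawtooth_eq_smoothRamp hL (round y) ?_
  linarith [abs_sub_round y, abs_sub_le w y (round y)]

theorem hasPolyBoundedDerivs_smoothSawtooth : HasPolyBoundedDerivs smoothSawtooth := by
  refine ⟨fun L hL => contDiff_iff_contDiffAt.2 fun y => ?_, fun k hk => ?_⟩
  · exact ((hasPolyBoundedDerivs_smoothRamp.1 L hL).comp
      (contDiff_id.sub contDiff_const)).contDiffAt.congr_of_eventuallyEq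
        (smoothSawtooth_eventuallyEq hL y)
  · obtain ⟨p, hp⟩ := hasPolyBoundedDerivs_smoothRamp.2 k hk
    refine ⟨p, fun L hL y => ?_⟩
    rw [((smoothSawtooth_eventuallyEq hL y).iteratedFDeriv ℝ k).eq_of_nhds,
      iteratedFDeriv_comp_sub]
    exact hp L hL _

theorem smoothSawtooth_periodic (L : ℕ) : Function.Periodic (smoothSawtooth L) 1 := fun y => by
  have hround : round (y + 1) = round y + 1 := by exact_mod_cast round_add_intCast y 1
  simp only [smoothSawtooth, hround]
  push_cast
  congr 1; ring

theorem abs_smoothSawtooth_le_one (L : ℕ) (y : ℝ) : |smoothSawtooth L y| ≤ 1 := by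
  have hr := abs_le.1 (abs_sub_round y)
  have h0 := Real.smoothTransition.nonneg ((L * (y - round y) + 1) / 2)
  have h1 := Real.smoothTransition.le_one ((L * (y - round y) + 1) / 2)
  rw [smoothSawtooth, smoothRamp, abs_le]
  constructor <;> linarith [hr.1, hr.2]

theorem smoothSawtooth_eq_sub_half (hL : 3 ≤ L) (h1 : 1 / (L : ℝ) ≤ y) (h2 : y ≤ 1 - 1 / L) :
    smoothSawtooth L y = y - 1 / 2 := by
  have hL0 : (0 : ℝ) < L := by exact_mod_cast (by omega : 0 < L)
  have hinv : 0 < 1 / (L : ℝ) := one_div_pos.2 hL0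
  rcases le_or_gt y (1 / 2) with hy | hy
  · rw [smoothSawtooth_eq_smoothRamp hL 0 (by rw [abs_lt]; push_cast; constructor <;> linarith),
      Int.cast_zero, sub_zero, smoothRamp_of_one_le (by rwa [div_le_iff₀' hL0] at h1)]
  · have hramp : L * (y - 1) ≤ -1 := by
      have := mul_le_mul_of_nonneg_left h2 hL0.le
      rw [mul_sub, mul_one_div_cancel hL0.ne'] at this
      linarith
    rw [smoothSawtooth_eq_smoothRamp hL 1 (by rw [abs_lt]; push_cast; constructor <;> linarith),
      Int.cast_one, smoothRamp_of_le_neg_one hramp]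
    ring

theorem abs_smoothSawtooth_sub_le (hL : 3 ≤ L) (x y : ℝ) :
    |smoothSawtooth L x - smoothSawtooth L y| ≤ sawtoothSlope * L * |x - y| := by
  refine convex_univ.norm_image_sub_le_of_norm_deriv_le
    (fun z _ => (hasPolyBoundedDerivs_smoothSawtooth.1 L hL).differentiable (by simp) z)
    (fun z _ => ?_) (mem_univ y) (mem_univ x)
  rw [(smoothSawtooth_eventuallyEq hL z).deriv_eq, deriv_comp_sub_const]
  exact norm_deriv_smoothRamp_le (by omega) _

end SmoothSawtooth

section Circle

theorem norm_coe_le_abs (r : ℝ) : ‖(r : Torus1)‖ ≤ |r| := by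
  rw [UnitAddCircle.norm_eq]
  simpa using round_le r 0

theorem coe_intCast (k : ℤ) : ((k : ℝ) : Torus1) = 0 :=
  (AddCircle.coe_eq_zero_iff 1).2 ⟨k, by simp⟩

theorem exists_coe_eq_and_abs_eq_norm (x : Torus1) : ∃ r : ℝ, (r : Torus1) = x ∧ |r| = ‖x‖ := by
  induction x using QuotientAddGroup.induction_on with
  | H y =>
    refine ⟨y - round y, ?_, UnitAddCircle.norm_eq.symm⟩
    rw [AddCircle.coe_sub, coe_intCast, sub_zero]

theorem coe_natCast_mul (N : ℕ) (r : ℝ) : ((N * r : ℝ) : Torus1) = N • (r : Torus1) := by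
  rw [← nsmul_eq_mul, AddCircle.coe_nsmul]

theorem nsmul_coe_inv_mul {N : ℕ} (hN : 0 < N) (r : ℝ) :
    N • (((N : ℝ)⁻¹ * r : ℝ) : Torus1) = r := by
  rw [← coe_natCast_mul, mul_inv_cancel_left₀ (by positivity)]

/-- The smooth sawtooth as a function on the circle. -/
def circleSawtooth {L : ℕ} (hL : 3 ≤ L) : C(Torus1, ℝ) where
  toFun := (smoothSawtooth_periodic L).lift
  continuous_toFun := continuous_quot_lift _ (hasPolyBoundedDerivs_smoothSawtooth.1 L hL).continuous

variable {L : ℕ} (hL : 3 ≤ L)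

theorem circleSawtooth_coe (y : ℝ) : circleSawtooth hL (y : Torus1) = smoothSawtooth L y :=
  (smoothSawtooth_periodic L).lift_coe y

theorem abs_circleSawtooth_le_one (y : Torus1) : |circleSawtooth hL y| ≤ 1 := by
  induction y using QuotientAddGroup.induction_on with
  | H y => exact abs_smoothSawtooth_le_one L y

theorem abs_circleSawtooth_sub_le (x y : Torus1) :
    |circleSawtooth hL x - circleSawtooth hL y| ≤ sawtoothSlope * L * ‖x - y‖ := by
  obtain ⟨s, rfl, -⟩ := exists_coe_eq_and_abs_eq_norm y
  obtain ⟨r, hr, hnorm⟩ := exists_coe_eq_and_abs_eq_norm (x - s)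
  obtain rfl : x = ((r + s : ℝ) : Torus1) := by rw [AddCircle.coe_add, hr, sub_add_cancel]
  rw [← hnorm, circleSawtooth_coe, circleSawtooth_coe]
  simpa using abs_smoothSawtooth_sub_le hL (r + s) s

theorem sub_coe_circleSawtooth {y : Torus1} (hy : 1 / (L : ℝ) ≤ ‖y‖) :
    y - (circleSawtooth hL y : Torus1) = ((1 / 2 : ℝ) : Torus1) := by
  obtain ⟨s, rfl, -⟩ := exists_coe_eq_and_abs_eq_norm y
  obtain ⟨t, ht0, ht1, hts⟩ : ∃ t : ℝ, 0 ≤ t ∧ t ≤ 1 ∧ (t : Torus1) = s :=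
    ⟨Int.fract s, Int.fract_nonneg s, (Int.fract_lt_one s).le, AddCircle.coe_fract s⟩
  have hlow : 1 / (L : ℝ) ≤ t :=
    (hts ▸ hy).trans ((norm_coe_le_abs t).trans_eq (abs_of_nonneg ht0))
  have hhigh : 1 / (L : ℝ) ≤ 1 - t := by
    have hshift : ((1 - t : ℝ) : Torus1) = -(s : Torus1) := by
      rw [AddCircle.coe_sub, AddCircle.coe_period, zero_sub, hts]
    refine (hy.trans_eq ?_).trans ((norm_coe_le_abs (1 - t)).trans_eq
      (abs_of_nonneg (sub_nonneg.2 ht1)))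
    rw [hshift, norm_neg]
  rw [← hts, circleSawtooth_coe, smoothSawtooth_eq_sub_half hL hlow (by linarith),
    ← AddCircle.coe_sub]
  congr 1; ring

end Circle

section Shear

theorem measurePreserving_prodMk_add {α G : Type*} [MeasurableSpace α] [MeasurableSpace G]
    [AddGroup G] [MeasurableAdd₂ G] (μ : Measure α) [SFinite μ] (ν : Measure G) [SFinite ν]
    [ν.IsAddRightInvariant] {g : α → G} (hg : Measurable g) :
    MeasurePreserving (fun p : α × G => (p.1, p.2 + g p.1)) (μ.prod ν) (μ.prod ν) :=
  (MeasurePreserving.id μ).skew_product (measurable_snd.add (hg.comp measurable_fst))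
    (.of_forall fun a => (measurePreserving_add_right ν (g a)).map_eq)

/-- The conjugacy `(x, y) ↦ (x - β y / N, y + N x - β y)` of the torus, the composition of the
shears `(x - β y / N, y)` and `(x, y + N x)`. -/
def shear {N : ℕ} (hN : 0 < N) (β : C(Torus1, ℝ)) : Torus2 ≃ₜ Torus2 where
  toFun p := (p.1 - ((N : ℝ)⁻¹ * β p.2 : ℝ), p.2 + N • p.1 - (β p.2 : Torus1))
  invFun p := (p.1 + ((N : ℝ)⁻¹ * β (p.2 - N • p.1) : ℝ), p.2 - N • p.1)
  left_inv p := by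
    have hsnd : p.2 + N • p.1 - (β p.2 : Torus1) - N • (p.1 - ((N : ℝ)⁻¹ * β p.2 : ℝ)) = p.2 := by
      rw [smul_sub, nsmul_coe_inv_mul hN]; abel
    simp only [hsnd, sub_add_cancel]
  right_inv p := by
    ext
    · simp only [add_sub_cancel_right]
    · simp only [smul_add, nsmul_coe_inv_mul hN]; abel
  continuous_toFun := by
    have : Continuous ((↑) : ℝ → Torus1) := AddCircle.continuous_mk' 1
    fun_prop
  continuous_invFun := by
    have : Continuous ((↑) : ℝ → Torus1) := AddCircle.continuous_mk' 1
    fun_prop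

/-- The lift of `shear` to the plane, `b` being the lift of `β`. -/
def shearLift (N : ℕ) (b : ℝ → ℝ) (p : ℝ × ℝ) : ℝ × ℝ :=
  (p.1 - (N : ℝ)⁻¹ * b p.2, p.2 + N * p.1 - b p.2)

/-- The lift of the inverse of `shear` to the plane, `b` being the lift of `β`. -/
def shearLiftInv (N : ℕ) (b : ℝ → ℝ) (p : ℝ × ℝ) : ℝ × ℝ :=
  (p.1 + (N : ℝ)⁻¹ * b (p.2 - N * p.1), p.2 - N * p.1)

theorem hasPolyBoundedDerivs_shearLift (N : ℕ) :
    HasPolyBoundedDerivs fun L => shearLift N (smoothSawtooth L) := by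
  have hx : HasPolyBoundedDerivs fun (_ : ℕ) (p : ℝ × ℝ) => p.1 := HasPolyBoundedDerivs.id.fst
  have hy : HasPolyBoundedDerivs fun (_ : ℕ) (p : ℝ × ℝ) => p.2 := HasPolyBoundedDerivs.id.snd
  have hβ := hasPolyBoundedDerivs_smoothSawtooth.comp hy
  exact (hx.sub (hβ.const_mul _)).prodMk ((hy.add (hx.const_mul _)).sub hβ)

theorem hasPolyBoundedDerivs_shearLiftInv (N : ℕ) :
    HasPolyBoundedDerivs fun L => shearLiftInv N (smoothSawtooth L) := by
  have hx : HasPolyBoundedDerivs fun (_ : ℕ) (p : ℝ × ℝ) => p.1 := HasPolyBoundedDerivs.id.fst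
  have hy : HasPolyBoundedDerivs fun (_ : ℕ) (p : ℝ × ℝ) => p.2 - N * p.1 :=
    HasPolyBoundedDerivs.id.snd.sub (hx.const_mul _)
  have hβ := hasPolyBoundedDerivs_smoothSawtooth.comp hy
  exact (hx.add (hβ.const_mul _)).prodMk hy

variable {N : ℕ} (hN : 0 < N) (β : C(Torus1, ℝ))

theorem shear_apply (p : Torus2) :
    shear hN β p = (p.1 - ((N : ℝ)⁻¹ * β p.2 : ℝ), p.2 + N • p.1 - (β p.2 : Torus1)) := rfl

theorem shear_symm_apply (p : Torus2) :
    (shear hN β).symm p = (p.1 + ((N : ℝ)⁻¹ * β (p.2 - N • p.1) : ℝ), p.2 - N • p.1) := rfl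

theorem isLiftOf_shearLift {b : ℝ → ℝ} (hb : ∀ y : ℝ, β y = b y) :
    IsLiftOf (shearLift N b) (shear hN β) := fun p => by
  simp only [torusProj, shearLift, shear_apply, hb, AddCircle.coe_sub, AddCircle.coe_add,
    coe_natCast_mul]

theorem isLiftOf_shearLiftInv {b : ℝ → ℝ} (hb : ∀ y : ℝ, β y = b y) :
    IsLiftOf (shearLiftInv N b) (shear hN β).symm := fun p => by
  have hsnd : ((p.2 - N * p.1 : ℝ) : Torus1) = (p.2 : Torus1) - N • (p.1 : Torus1) := by
    rw [AddCircle.coe_sub, coe_natCast_mul]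
  simp only [torusProj, shearLiftInv, shear_symm_apply, ← hsnd, hb, AddCircle.coe_add]

theorem shear_add_horizontal (u : Torus2) (t : Torus1) :
    shear hN β (u + (t, 0)) = shear hN β u + (t, N • t) := by
  simp only [shear_apply, Prod.fst_add, Prod.snd_add, add_zero, Prod.mk_add_mk, smul_add]
  ext <;> simp only <;> abel

theorem dist_shear_le {C : ℝ} (hC : 1 ≤ C) (hβ : ∀ x y, |β x - β y| ≤ C * ‖x - y‖)
    (u v : Torus2) :
    dist (shear hN β u) (shear hN β v) ≤ 2 * N * ‖u.1 - v.1‖ + 2 * C * ‖u.2 - v.2‖ := by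
  have hN1 : (1 : ℝ) ≤ N := by exact_mod_cast hN
  have hx := norm_nonneg (u.1 - v.1)
  have hy := norm_nonneg (u.2 - v.2)
  have hβuv := hβ u.2 v.2
  rw [Prod.dist_eq, dist_eq_norm, dist_eq_norm]
  refine max_le ?_ ?_
  · have hsub : (shear hN β u).1 - (shear hN β v).1 =
        u.1 - v.1 - ((N : ℝ)⁻¹ * (β u.2 - β v.2) : ℝ) := by
      simp only [shear_apply, mul_sub, AddCircle.coe_sub]; abel
    have hcoe : ‖(((N : ℝ)⁻¹ * (β u.2 - β v.2) : ℝ) : Torus1)‖ ≤ |β u.2 - β v.2| := by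
      refine (norm_coe_le_abs _).trans ?_
      rw [abs_mul, abs_of_nonneg (by positivity : (0 : ℝ) ≤ (N : ℝ)⁻¹)]
      exact mul_le_of_le_one_left (abs_nonneg _) (inv_le_one_of_one_le₀ hN1)
    rw [hsub]
    refine (norm_sub_le _ _).trans ?_
    nlinarith
  · have hsub : (shear hN β u).2 - (shear hN β v).2 =
        u.2 - v.2 + N • (u.1 - v.1) - (β u.2 - β v.2 : ℝ) := by
      simp only [shear_apply, smul_sub, AddCircle.coe_sub]; abel
    have hcoe := norm_coe_le_abs (β u.2 - β v.2)
    have hsmul : ‖N • (u.1 - v.1)‖ ≤ N * ‖u.1 - v.1‖ := norm_nsmul_le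
    rw [hsub]
    refine (norm_sub_le _ _).trans ?_
    nlinarith [norm_add_le (u.2 - v.2) (N • (u.1 - v.1))]

theorem measurePreserving_shear : MeasurePreserving (shear hN β) volume volume := by
  have hg : Measurable fun y : Torus1 => -(((N : ℝ)⁻¹ * β y : ℝ) : Torus1) := by fun_prop
  have hhorizontal : MeasurePreserving
      (fun p : Torus2 => (p.1 + -(((N : ℝ)⁻¹ * β p.2 : ℝ) : Torus1), p.2)) volume volume :=
    (Measure.measurePreserving_swap.comp
      (measurePreserving_prodMk_add volume volume hg)).comp Measure.measurePreserving_swap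
  have hvertical : MeasurePreserving (fun p : Torus2 => (p.1, p.2 + N • p.1)) volume volume :=
    measurePreserving_prodMk_add volume volume (by fun_prop)
  convert hvertical.comp hhorizontal using 1
  funext p
  rw [shear_apply, Function.comp_apply, smul_add, smul_neg, nsmul_coe_inv_mul hN, ← add_assoc,
    ← sub_eq_add_neg, ← sub_eq_add_neg]

end Shear

section Stages

/-- The data after finitely many steps of the construction: the conjugacy `H = h₀ ∘ ⋯ ∘ h_{n-1}`
with its lifts to the plane, the exponents `a` and `b` of `N_n = 2 ^ a` and `N_{n+1} = 2 ^ b`, and a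
Lipschitz constant `K` of `H`. -/
structure Stage where
  a : ℕ
  b : ℕ
  H : Torus2 ≃ₜ Torus2
  lift : ℝ × ℝ → ℝ × ℝ
  liftInv : ℝ × ℝ → ℝ × ℝ
  K : ℝ
  lift_bounded : HasPolyBoundedDerivs fun _ => lift
  liftInv_bounded : HasPolyBoundedDerivs fun _ => liftInv
  isLiftOf_lift : IsLiftOf lift H
  isLiftOf_liftInv : IsLiftOf liftInv H.symm
  one_le_K : 1 ≤ K
  dist_H_le : ∀ u v, dist (H u) (H v) ≤ K * dist u v
  measurePreserving_H : MeasurePreserving H volume volume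

namespace Stage

/-- The stage at which the construction starts, with the identity as conjugacy. -/
def initial : Stage where
  a := 10
  b := 60
  H := Homeomorph.refl _
  lift := id
  liftInv := id
  K := 1
  lift_bounded := .id
  liftInv_bounded := .id
  isLiftOf_lift _ := rfl
  isLiftOf_liftInv _ := rfl
  one_le_K := le_rfl
  dist_H_le u v := by simp
  measurePreserving_H := MeasurePreserving.id _

variable (S : Stage)

/-- The period `N_n` of the `n`-th rotation. -/
def N : ℕ := 2 ^ S.a

theorem N_pos : 0 < S.N := Nat.two_pow_pos _

theorem K_pos : 0 < S.K := zero_lt_one.trans_le S.one_le_K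

/-- The elementary conjugacy composed with `H` in the next stage. -/
def nextShear {L : ℕ} (hL : 3 ≤ L) : Torus2 ≃ₜ Torus2 := shear S.N_pos (circleSawtooth hL)

theorem dist_nextShear_le {L : ℕ} (hL : 3 ≤ L) (u v : Torus2) :
    dist (S.nextShear hL u) (S.nextShear hL v) ≤
      2 * S.N * ‖u.1 - v.1‖ + 2 * sawtoothSlope * L * ‖u.2 - v.2‖ := by
  rw [mul_assoc 2 sawtoothSlope]
  refine dist_shear_le _ _ (one_le_mul_of_one_le_of_one_le one_le_sawtoothSlope ?_)
    (abs_circleSawtooth_sub_le hL) u v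
  exact_mod_cast (by omega : 1 ≤ L)

/-- The stage obtained by composing `H` with the elementary conjugacy of parameter `L`. -/
def step {L : ℕ} (hL : 3 ≤ L) : Stage where
  a := S.b
  b := L
  H := (S.nextShear hL).trans S.H
  lift := S.lift ∘ shearLift S.N (smoothSawtooth L)
  liftInv := shearLiftInv S.N (smoothSawtooth L) ∘ S.liftInv
  K := S.K * (2 * S.N + 2 * sawtoothSlope * L)
  lift_bounded := S.lift_bounded.comp ((hasPolyBoundedDerivs_shearLift S.N).constFamily hL)
  liftInv_bounded := ((hasPolyBoundedDerivs_shearLiftInv S.N).constFamily hL).comp S.liftInv_bounded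
  isLiftOf_lift p := (S.isLiftOf_lift _).trans
    (congrArg S.H (isLiftOf_shearLift S.N_pos _ (circleSawtooth_coe hL) p))
  isLiftOf_liftInv p := (isLiftOf_shearLiftInv S.N_pos _ (circleSawtooth_coe hL) _).trans
    (congrArg (S.nextShear hL).symm (S.isLiftOf_liftInv p))
  one_le_K := by
    have hN : (1 : ℝ) ≤ S.N := by exact_mod_cast S.N_pos
    have hslope := one_le_sawtoothSlope
    exact one_le_mul_of_one_le_of_one_le S.one_le_K
      (le_add_of_le_of_nonneg (by linarith) (by positivity))
  dist_H_le u v := by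
    have hslope := one_le_sawtoothSlope
    rw [mul_assoc, add_mul]
    refine (S.dist_H_le _ _).trans
      (mul_le_mul_of_nonneg_left ((S.dist_nextShear_le hL u v).trans ?_) S.K_pos.le)
    rw [← dist_eq_norm, ← dist_eq_norm, Prod.dist_eq]
    gcongr
    exacts [le_max_left _ _, le_max_right _ _]
  measurePreserving_H := S.measurePreserving_H.comp (measurePreserving_shear _ _)

/-- The difference of the lifts of `T_{n+1} ^ t` and `T_n ^ t` up to a translation in time: with
`s = σ / N_{n+1}`, the map `H ∘ ((t + s, N_n s) + ·) ∘ H⁻¹ - H ∘ ((t, 0) + ·) ∘ H⁻¹`. -/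
def perturbation (t σ : ℝ) (z : ℝ × ℝ) : ℝ × ℝ :=
  S.lift (S.liftInv z + (t + σ * (1 / 2 ^ S.b), σ * (2 ^ S.a / 2 ^ S.b))) -
    S.lift (S.liftInv z + (t, 0))

/-- The parameters of the `n`-th stage make the `n`-th perturbation small, both uniformly and
in `C^{n-1}`. -/
structure Good (n : ℕ) (S : Stage) : Prop where
  a_lt_b : S.a < S.b
  sq_le_two_pow : (S.K * S.N ^ 2 * 2 ^ (n + 5)) ^ 2 ≤ 2 ^ S.b
  norm_iteratedFDeriv_perturbation_le : ∀ t σ : ℝ, |σ| ≤ 1 → ∀ k < n, ∀ z,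
    ‖iteratedFDeriv ℝ k (S.perturbation t σ) z‖ ≤ (1 / 2) ^ n

theorem good_initial : initial.Good 0 where
  a_lt_b := by norm_num [initial]
  sq_le_two_pow := by norm_num [initial, N]
  norm_iteratedFDeriv_perturbation_le _ _ _ _ hk := absurd hk (Nat.not_lt_zero _)

theorem eventually_mul_pow_le_two_pow (C : ℝ) (p : ℕ) :
    ∀ᶠ L : ℕ in atTop, C * (L : ℝ) ^ p ≤ 2 ^ L := by
  have h := ((isLittleO_pow_const_const_pow_of_one_lt (R := ℝ) p one_lt_two).const_mul_left C).def
    one_pos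
  filter_upwards [h] with L hL
  simpa using (le_abs_self _).trans hL

theorem norm_horizontal_sub_le {σ : ℝ} (hσ : |σ| ≤ 1) (t : ℝ) (b L : ℕ) :
    ‖((t + σ * (1 / 2 ^ L), σ * (2 ^ b / 2 ^ L)) : ℝ × ℝ) - (t, 0)‖ ≤ 2 ^ b / 2 ^ L := by
  have hb : (1 : ℝ) ≤ 2 ^ b := one_le_pow₀ one_le_two
  simp only [Prod.mk_sub_mk, add_sub_cancel_left, sub_zero, Prod.norm_def, Real.norm_eq_abs,
    abs_mul, abs_div, abs_pow, abs_one, abs_two]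
  exact max_le ((mul_le_of_le_one_left (by positivity) hσ).trans (by gcongr))
    (mul_le_of_le_one_left (by positivity) hσ)

-- The perturbation is polynomially large in `L`, while its parameters differ by `O(2 ^ (-L))`.
theorem eventually_norm_iteratedFDeriv_perturbation_step_le (k : ℕ) {ε : ℝ} (hε : 0 < ε) :
    ∀ᶠ L : ℕ in atTop, ∀ hL : 3 ≤ L, ∀ t σ : ℝ, |σ| ≤ 1 → ∀ z,
      ‖iteratedFDeriv ℝ k ((S.step hL).perturbation t σ) z‖ ≤ ε := by
  have hjoint : HasPolyBoundedDerivs fun (L : ℕ) (q : (ℝ × ℝ) × (ℝ × ℝ)) =>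
      S.lift (shearLift S.N (smoothSawtooth L)
        (shearLiftInv S.N (smoothSawtooth L) (S.liftInv q.1) + q.2)) :=
    S.lift_bounded.comp ((hasPolyBoundedDerivs_shearLift S.N).comp
      (((hasPolyBoundedDerivs_shearLiftInv S.N).comp
        (S.liftInv_bounded.comp HasPolyBoundedDerivs.id.fst)).add HasPolyBoundedDerivs.id.snd))
  obtain ⟨p, hp⟩ := hjoint.2 (k + 1) k.succ_ne_zero
  filter_upwards [eventually_mul_pow_le_two_pow (2 ^ S.b / ε) p] with L hlarge hL t σ hσ z
  refine (norm_iteratedFDeriv_sub_prodMk_le (hjoint.1 L hL) (hp L hL) (t, 0)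
    (t + σ * (1 / 2 ^ L), σ * (2 ^ S.b / 2 ^ L)) z).trans ?_
  refine (mul_le_mul_of_nonneg_left (norm_horizontal_sub_le hσ t S.b L) (by positivity)).trans ?_
  rw [div_mul_eq_mul_div, div_le_iff₀ hε] at hlarge
  rw [mul_div_assoc', div_le_iff₀ (by positivity)]
  linarith

theorem eventually_sq_step_le_two_pow (n : ℕ) :
    ∀ᶠ L : ℕ in atTop, ∀ hL : 3 ≤ L,
      ((S.step hL).K * (S.step hL).N ^ 2 * 2 ^ (n + 5)) ^ 2 ≤ (2 : ℝ) ^ L := by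
  filter_upwards [eventually_mul_pow_le_two_pow
    ((S.K * (2 * S.N + 2 * sawtoothSlope) * (2 ^ S.b) ^ 2 * 2 ^ (n + 5)) ^ 2) 2] with L hlarge hL
  refine le_trans ?_ hlarge
  rw [← mul_pow]
  have hL1 : (1 : ℝ) ≤ L := by exact_mod_cast (by omega : 1 ≤ L)
  have hK := S.K_pos
  have : 0 < sawtoothSlope := zero_lt_one.trans_le one_le_sawtoothSlope
  have hKstep : (S.step hL).K ≤ S.K * (2 * S.N + 2 * sawtoothSlope) * L := by
    change S.K * (2 * S.N + 2 * sawtoothSlope * L) ≤ _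
    rw [mul_assoc S.K, add_mul]
    have hN : (2 : ℝ) * S.N ≤ 2 * S.N * L := le_mul_of_one_le_right (by positivity) hL1
    gcongr
  have hNstep : ((S.step hL).N : ℝ) = 2 ^ S.b := by simp [N, step]
  have hpos := (S.step hL).K_pos
  rw [hNstep]
  refine pow_le_pow_left₀ (by positivity) ?_ 2
  calc (S.step hL).K * (2 ^ S.b) ^ 2 * 2 ^ (n + 5)
      ≤ S.K * (2 * S.N + 2 * sawtoothSlope) * L * (2 ^ S.b) ^ 2 * 2 ^ (n + 5) := by gcongr
    _ = _ := by ring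

theorem exists_good_step (n : ℕ) : ∃ (L : ℕ) (hL : 3 ≤ L), (S.step hL).Good (n + 1) ∧
    2 ^ n ≤ L ∧ (S.K ^ 2 * S.N) ^ n ≤ L := by
  have hsmall := (Filter.eventually_all_finset (Finset.range (n + 1))).2 fun k _ =>
    S.eventually_norm_iteratedFDeriv_perturbation_step_le k (ε := (1 / 2) ^ (n + 1)) (by positivity)
  obtain ⟨L, hsmall, hsq, hpow, hL, htwo, hlt⟩ := (hsmall.and
    ((S.eventually_sq_step_le_two_pow (n + 1)).and
    ((tendsto_natCast_atTop_atTop.eventually_ge_atTop ((S.K ^ 2 * S.N) ^ n)).and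
    ((eventually_ge_atTop 3).and
    ((eventually_ge_atTop (2 ^ n)).and (eventually_gt_atTop S.b)))))).exists
  exact ⟨L, hL, ⟨hlt, hsq hL, fun t σ hσ k hk =>
    hsmall k (Finset.mem_range.2 hk) hL t σ hσ⟩, htwo, hpow⟩

end Stage

/-- A run of the construction: each stage is obtained from the previous one by a step whose
parameter `L n` is large enough. -/
structure AnosovKatok where
  stage : ℕ → Stage
  L : ℕ → ℕ
  three_le_L : ∀ n, 3 ≤ L n
  stage_zero : stage 0 = .initial
  stage_succ : ∀ n, stage (n + 1) = (stage n).step (three_le_L n)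
  good : ∀ n, (stage n).Good n
  two_pow_le_L : ∀ n, 2 ^ n ≤ L n
  pow_le_L : ∀ n, ((stage n).K ^ 2 * (stage n).N) ^ n ≤ L n

namespace AnosovKatok

theorem nonempty : Nonempty AnosovKatok := by
  choose L hL hgood htwo hpow using fun n S => Stage.exists_good_step S n
  let stage : ℕ → Stage := fun n => n.rec .initial fun n S => S.step (hL n S)
  exact ⟨{
    stage := stage
    L := fun n => L n (stage n)
    three_le_L := fun n => hL n (stage n)
    stage_zero := rfl
    stage_succ := fun _ => rfl
    good := fun n => n.casesOn Stage.good_initial fun n => hgood n (stage n)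
    two_pow_le_L := fun n => htwo n (stage n)
    pow_le_L := fun n => hpow n (stage n) }⟩

variable (S : AnosovKatok) (n : ℕ)

/-- The period `N_n` of the `n`-th rotation. -/
def N : ℕ := (S.stage n).N

/-- The Lipschitz constant `K_n` of `H_n`. -/
def K : ℝ := (S.stage n).K

/-- The elementary conjugacy `h_n`. -/
def h : Torus2 ≃ₜ Torus2 := (S.stage n).nextShear (S.three_le_L n)

/-- The conjugacy `H_n = h₀ ∘ ⋯ ∘ h_{n-1}`. -/
def H : Torus2 ≃ₜ Torus2 := (S.stage n).H

theorem N_pos : 0 < S.N n := (S.stage n).N_pos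

theorem N_cast_pos : (0 : ℝ) < S.N n := by exact_mod_cast S.N_pos n

theorem one_le_N_cast : (1 : ℝ) ≤ S.N n := by exact_mod_cast S.N_pos n

theorem one_le_K : 1 ≤ S.K n := (S.stage n).one_le_K

theorem K_pos : 0 < S.K n := (S.stage n).K_pos

theorem N_zero : S.N 0 = 2 ^ 10 := by rw [N, S.stage_zero]; rfl

theorem N_succ : S.N (n + 1) = 2 ^ (S.stage n).b := by rw [N, S.stage_succ]; rfl

theorem N_add_two : S.N (n + 2) = 2 ^ S.L n := by rw [N_succ, S.stage_succ]; rfl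

theorem H_zero (u : Torus2) : S.H 0 u = u := by rw [H, S.stage_zero]; rfl

theorem H_succ (u : Torus2) : S.H (n + 1) u = S.H n (S.h n u) := by rw [H, S.stage_succ]; rfl

theorem H_symm_succ (u : Torus2) : (S.H (n + 1)).symm u = (S.h n).symm ((S.H n).symm u) := by
  rw [H, S.stage_succ]; rfl

theorem h_apply (p : Torus2) : S.h n p =
    (p.1 - ((S.N n : ℝ)⁻¹ * circleSawtooth (S.three_le_L n) p.2 : ℝ),
      p.2 + S.N n • p.1 - (circleSawtooth (S.three_le_L n) p.2 : Torus1)) := rfl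

theorem h_symm_apply (p : Torus2) : (S.h n).symm p =
    (p.1 + ((S.N n : ℝ)⁻¹ * circleSawtooth (S.three_le_L n) (p.2 - S.N n • p.1) : ℝ),
      p.2 - S.N n • p.1) := rfl

theorem h_add_horizontal (u : Torus2) (t : Torus1) :
    S.h n (u + (t, 0)) = S.h n u + (t, S.N n • t) :=
  shear_add_horizontal (S.N_pos n) _ u t

theorem dist_H_le (u v : Torus2) : dist (S.H n u) (S.H n v) ≤ S.K n * dist u v :=
  (S.stage n).dist_H_le u v

theorem measurePreserving_H : MeasurePreserving (S.H n) volume volume :=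
  (S.stage n).measurePreserving_H

theorem exists_N_succ_eq : ∃ d, 1 ≤ d ∧ S.N (n + 1) = S.N n * 2 ^ d := by
  have hlt := (S.good n).a_lt_b
  refine ⟨(S.stage n).b - (S.stage n).a, by omega, ?_⟩
  rw [N_succ, N, Stage.N, ← pow_add]
  congr 1; omega

theorem two_mul_N_le : 2 * S.N n ≤ S.N (n + 1) := by
  obtain ⟨d, hd, h⟩ := S.exists_N_succ_eq n
  rw [h, mul_comm]
  exact Nat.mul_le_mul_left _ (Nat.le_self_pow (by omega) 2)

theorem N_monotone : Monotone S.N :=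
  monotone_nat_of_le_succ fun n => by have := S.two_mul_N_le n; omega

/-- The bound `K_n N_n / N_{n+1}` for the uniform distance between `T_n` and `T_{n+1}`. -/
def err : ℝ := S.K n * S.N n / S.N (n + 1)

theorem err_nonneg : 0 ≤ S.err n := by
  have := S.K_pos n
  rw [err]; positivity

theorem K_mul_N_sq_le_sqrt : S.K n * S.N n ^ 2 * 2 ^ (n + 5) ≤ √(S.N (n + 1)) := by
  apply Real.le_sqrt_of_sq_le
  rw [N_succ]
  exact_mod_cast (S.good n).sq_le_two_pow

theorem err_le_div_mul_sqrt : S.err n ≤ (1 / 2) ^ (n + 5) / (S.N n * √(S.N (n + 1))) := by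
  have := S.N_cast_pos n
  have := S.N_cast_pos (n + 1)
  have hsq : √(S.N (n + 1) : ℝ) * √(S.N (n + 1)) = S.N (n + 1) :=
    Real.mul_self_sqrt (S.N_cast_pos _).le
  calc S.err n
      = S.K n * S.N n ^ 2 * 2 ^ (n + 5) * ((1 / 2) ^ (n + 5) / (S.N n * S.N (n + 1))) := by
        rw [err, one_div_pow]; field_simp
    _ ≤ √(S.N (n + 1)) * ((1 / 2) ^ (n + 5) / (S.N n * S.N (n + 1))) := by
        gcongr; exact S.K_mul_N_sq_le_sqrt n
    _ = (1 / 2) ^ (n + 5) / (S.N n * √(S.N (n + 1))) := by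
        rw [← mul_div_assoc, div_eq_div_iff (by positivity) (by positivity)]
        linear_combination (1 / 2) ^ (n + 5) * (S.N n : ℝ) * hsq

theorem err_le_div_sqrt : S.err n ≤ (1 / 2) ^ (n + 5) / √(S.N (n + 1)) := by
  have hsqrt : 0 < √(S.N (n + 1) : ℝ) := Real.sqrt_pos.2 (S.N_cast_pos _)
  refine (S.err_le_div_mul_sqrt n).trans ?_
  gcongr
  exact le_mul_of_one_le_left hsqrt.le (S.one_le_N_cast n)

theorem err_le_div_N : S.err n ≤ (1 / 2) ^ (n + 5) / S.N n := by
  have hN := S.N_cast_pos n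
  refine (S.err_le_div_mul_sqrt n).trans ?_
  gcongr
  exact le_mul_of_one_le_right hN.le (Real.one_le_sqrt.2 (S.one_le_N_cast _))

theorem err_le : S.err n ≤ (1 / 2) ^ (n + 5) :=
  (S.err_le_div_N n).trans (div_le_self (by positivity) (S.one_le_N_cast n))

-- The last elementary conjugacy expands horizontal translations by the factor `N_n` only.
theorem dist_H_add_horizontal_le (u : Torus2) (s : Torus1) :
    dist (S.H n (u + (s, 0))) (S.H n u) ≤ S.N n * (1 / 2) ^ (n + 4) * ‖s‖ := by
  cases n with
  | zero =>
    rw [H_zero, H_zero, N_zero, dist_eq_norm, add_sub_cancel_left, Prod.norm_def, norm_zero,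
      max_eq_left (norm_nonneg s)]
    norm_num
    linarith [norm_nonneg s]
  | succ n =>
    have hdist : dist (S.h n u + (s, S.N n • s)) (S.h n u) ≤ S.N n * ‖s‖ := by
      rw [dist_eq_norm, add_sub_cancel_left, Prod.norm_def]
      exact max_le (le_mul_of_one_le_left (norm_nonneg s) (S.one_le_N_cast n)) norm_nsmul_le
    have herr : S.K n * S.N n ≤ S.N (n + 1) * (1 / 2) ^ (n + 5) := by
      have := S.err_le n
      rwa [err, div_le_iff₀' (S.N_cast_pos _)] at this
    rw [H_succ, H_succ, h_add_horizontal]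
    calc dist (S.H n (S.h n u + (s, S.N n • s))) (S.H n (S.h n u))
        ≤ S.K n * (S.N n * ‖s‖) := (S.dist_H_le n _ _).trans
          (mul_le_mul_of_nonneg_left hdist (S.K_pos n).le)
      _ = S.K n * S.N n * ‖s‖ := by ring
      _ ≤ S.N (n + 1) * (1 / 2) ^ (n + 1 + 4) * ‖s‖ := by gcongr

/-- The rotation numbers `α_n` of the approximating maps `T_n`. -/
def alpha : ℝ := ∑ k ∈ Finset.range (n + 1), 1 / (S.N k : ℝ)

theorem alpha_succ : S.alpha (n + 1) = S.alpha n + 1 / S.N (n + 1) := Finset.sum_range_succ _ _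

theorem exists_odd_eq_N_mul_alpha : ∃ p : ℕ, Odd p ∧ (S.N n : ℝ) * S.alpha n = p := by
  induction n with
  | zero => exact ⟨1, odd_one, by simp [alpha, (S.N_cast_pos 0).ne']⟩
  | succ n ih =>
    obtain ⟨p, -, h⟩ := ih
    obtain ⟨d, hd, hN⟩ := S.exists_N_succ_eq n
    refine ⟨2 ^ d * p + 1, ((Nat.even_pow.2 ⟨even_two, by omega⟩).mul_right _).add_one, ?_⟩
    rw [alpha_succ, mul_add, mul_one_div_cancel (S.N_cast_pos _).ne', hN]
    push_cast
    rw [← h]; ring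

end AnosovKatok

end Stages

section Limit

theorem measurePreserving_of_tendsto {X Y : Type*} [MeasurableSpace X] [MeasurableSpace Y]
    [TopologicalSpace Y] [TopologicalSpace.PseudoMetrizableSpace Y] [BorelSpace Y] {μ : Measure X}
    {ν : Measure Y} [IsFiniteMeasure μ] [IsFiniteMeasure ν] {f : ℕ → X → Y} {g : X → Y}
    (hf : ∀ n, MeasurePreserving (f n) μ ν) (hlim : ∀ x, Tendsto (f · x) atTop (𝓝 (g x))) :
    MeasurePreserving g μ ν := by
  have hg : Measurable g :=
    measurable_of_tendsto_metrizable (fun n => (hf n).measurable) (tendsto_pi_nhds.2 hlim)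
  let := TopologicalSpace.pseudoMetrizableSpacePseudoMetric Y
  refine ⟨hg, ext_of_forall_integral_eq_of_IsFiniteMeasure fun φ => ?_⟩
  rw [integral_map hg.aemeasurable φ.continuous.aestronglyMeasurable]
  have hconv : Tendsto (fun n => ∫ x, φ (f n x) ∂μ) atTop (𝓝 (∫ x, φ (g x) ∂μ)) :=
    tendsto_integral_of_dominated_convergence (fun _ => ‖φ‖)
      (fun n => (φ.continuous.measurable.comp (hf n).measurable).aestronglyMeasurable)
      (integrable_const _) (fun n => .of_forall fun x => φ.norm_coe_le_norm _)
      (.of_forall fun x => (φ.continuous.tendsto _).comp (hlim x))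
  have hconst : ∀ n, ∫ x, φ (f n x) ∂μ = ∫ y, φ y ∂ν := fun n => by
    rw [← (hf n).map_eq, integral_map (hf n).aemeasurable φ.continuous.aestronglyMeasurable]
  simp only [hconst] at hconv
  exact tendsto_nhds_unique hconv tendsto_const_nhds

theorem torusProj_add (p q : ℝ × ℝ) : torusProj (p + q) = torusProj p + torusProj q := by
  simp [torusProj]

theorem torusProj_sub (p q : ℝ × ℝ) : torusProj (p - q) = torusProj p - torusProj q := by
  simp [torusProj]

theorem continuous_torusProj : Continuous torusProj :=
  ((AddCircle.continuous_mk' 1).comp continuous_fst).prodMk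
    ((AddCircle.continuous_mk' 1).comp continuous_snd)

instance isProbabilityMeasure_volume_torus1 : IsProbabilityMeasure (volume : Measure Torus1) :=
  ⟨by rw [AddCircle.measure_univ, ENNReal.ofReal_one]⟩

instance isAddRightInvariant_volume_torus2 : (volume : Measure Torus2).IsAddRightInvariant :=
  inferInstanceAs ((volume : Measure Torus1).prod volume).IsAddRightInvariant

namespace AnosovKatok

variable (S : AnosovKatok) (n : ℕ) (i j : ℤ) (z : Torus2)

/-- The iterate `T_nⁱ` of the periodic map `T_n = H_n ∘ R_{α_n} ∘ H_n⁻¹`. -/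
def approx (i : ℤ) (z : Torus2) : Torus2 :=
  S.H n ((S.H n).symm z + (((i * S.alpha n : ℝ) : Torus1), (0 : Torus1)))

theorem H_succ_symm_add_horizontal (t : Torus1) :
    S.H (n + 1) ((S.H (n + 1)).symm z + (t, 0)) = S.H n ((S.H n).symm z + (t, S.N n • t)) := by
  rw [H_succ, H_symm_succ, h_add_horizontal, Homeomorph.apply_symm_apply]

theorem nsmul_coe_mul_alpha : S.N n • ((i * S.alpha n : ℝ) : Torus1) = 0 := by
  obtain ⟨p, -, hp⟩ := S.exists_odd_eq_N_mul_alpha n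
  rw [← coe_natCast_mul, mul_left_comm, hp]
  exact_mod_cast coe_intCast (i * p)

theorem nsmul_coe_mul_alpha_succ : S.N n • ((i * S.alpha (n + 1) : ℝ) : Torus1) =
    ((i * (S.N n / S.N (n + 1)) : ℝ) : Torus1) := by
  rw [alpha_succ, mul_add, AddCircle.coe_add, smul_add, nsmul_coe_mul_alpha, zero_add,
    ← coe_natCast_mul, mul_left_comm, mul_one_div]

theorem approx_succ_eq : S.approx (n + 1) i z = S.H n ((S.H n).symm z +
    (((i * S.alpha (n + 1) : ℝ) : Torus1), ((i * (S.N n / S.N (n + 1)) : ℝ) : Torus1))) := by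
  rw [approx, H_succ_symm_add_horizontal, nsmul_coe_mul_alpha_succ]

theorem approx_add : S.approx n (i + j) z = S.approx n i (S.approx n j z) := by
  simp only [approx, Homeomorph.symm_apply_apply, Int.cast_add, add_mul, AddCircle.coe_add]
  rw [add_assoc, add_comm ((i * S.alpha n : ℝ) : Torus1)]
  congr 2
  exact Prod.ext rfl (add_zero 0).symm

theorem approx_zero : S.approx n 0 z = z := by
  simp only [approx, Int.cast_zero, zero_mul, AddCircle.coe_zero]
  rw [← Prod.zero_eq_mk, add_zero, Homeomorph.apply_symm_apply]

theorem continuous_approx : Continuous (S.approx n i) :=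
  (S.H n).continuous.comp ((S.H n).symm.continuous.add continuous_const)

theorem measurePreserving_approx : MeasurePreserving (S.approx n i) volume volume :=
  (S.measurePreserving_H n).comp ((measurePreserving_add_right volume _).comp
    ((S.measurePreserving_H n).symm (S.H n).toMeasurableEquiv))

theorem dist_approx_succ_le :
    dist (S.approx n i z) (S.approx (n + 1) i z) ≤ |(i : ℝ)| * S.err n := by
  have hN := S.N_cast_pos n
  have hN' := S.N_cast_pos (n + 1)
  have hfst : ‖((i * (1 / S.N (n + 1)) : ℝ) : Torus1)‖ ≤ |(i : ℝ)| * (S.N n / S.N (n + 1)) := by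
    refine (norm_coe_le_abs _).trans ?_
    rw [abs_mul, abs_of_pos (by positivity : (0 : ℝ) < 1 / S.N (n + 1))]
    gcongr
    exact S.one_le_N_cast n
  have hsnd : ‖((i * (S.N n / S.N (n + 1)) : ℝ) : Torus1)‖ ≤ |(i : ℝ)| * (S.N n / S.N (n + 1)) := by
    refine (norm_coe_le_abs _).trans_eq ?_
    rw [abs_mul, abs_of_pos (by positivity : (0 : ℝ) < S.N n / S.N (n + 1))]
  rw [approx_succ_eq, approx, dist_comm]
  calc _ ≤ S.K n * (|(i : ℝ)| * (S.N n / S.N (n + 1))) := by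
        refine (S.dist_H_le n _ _).trans (mul_le_mul_of_nonneg_left ?_ (S.K_pos n).le)
        rw [dist_add_left, dist_eq_norm, Prod.mk_sub_mk, Prod.norm_def, ← AddCircle.coe_sub,
          ← mul_sub, alpha_succ, add_sub_cancel_left, sub_zero]
        exact max_le hfst hsnd
    _ = |(i : ℝ)| * S.err n := by rw [err]; ring

/-- The tail `∑_{k ≥ n} K_k N_k / N_{k+1}`, which bounds the distance between `T_n` and its
limit. -/
def tail : ℝ := ∑' k, S.err (n + k)

theorem summable_err : Summable S.err :=
  .of_nonneg_of_le S.err_nonneg S.err_le ((summable_nat_add_iff 5).2 summable_geometric_two)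

theorem tail_nonneg : 0 ≤ S.tail n := tsum_nonneg fun _ => S.err_nonneg _

theorem tail_le_of_forall_err_le {c : ℝ}
    (h : ∀ k, n ≤ k → S.err k ≤ (1 / 2) ^ (k + 5) * c) : S.tail n ≤ (1 / 2) ^ (n + 4) * c := by
  have hgeom : HasSum (fun k : ℕ => (1 / 2 : ℝ) ^ (n + k + 5) * c) ((1 / 2) ^ (n + 4) * c) := by
    have hsum := hasSum_geometric_two.mul_left ((1 / 2 : ℝ) ^ (n + 5) * c)
    rw [show (1 / 2 : ℝ) ^ (n + 5) * c * 2 = (1 / 2) ^ (n + 4) * c by ring] at hsum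
    exact hsum.congr_fun fun k => by ring
  rw [← hgeom.tsum_eq]
  exact (S.summable_err.comp_injective (add_right_injective n)).tsum_le_tsum
    (fun k => h (n + k) (Nat.le_add_right n k)) hgeom.summable

theorem tail_le_div_sqrt : S.tail n ≤ (1 / 2) ^ (n + 4) / √(S.N (n + 1)) := by
  rw [div_eq_mul_inv]
  refine S.tail_le_of_forall_err_le n fun k hk => (S.err_le_div_sqrt k).trans ?_
  have : 0 < √(S.N (n + 1) : ℝ) := Real.sqrt_pos.2 (S.N_cast_pos _)
  rw [div_eq_mul_inv]
  gcongr
  exact S.N_monotone (by omega)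

theorem tail_le_div_N : S.tail n ≤ (1 / 2) ^ (n + 4) / S.N n := by
  rw [div_eq_mul_inv]
  refine S.tail_le_of_forall_err_le n fun k hk => (S.err_le_div_N k).trans ?_
  have := S.N_cast_pos n
  rw [div_eq_mul_inv]
  gcongr
  exact S.N_monotone hk

theorem tendsto_tail : Tendsto S.tail atTop (𝓝 0) := by
  simpa only [tail, add_comm] using! tendsto_sum_nat_add S.err

/-- The iterate `Tⁱ` of the limit `T = lim T_n`. -/
def limit (i : ℤ) (z : Torus2) : Torus2 := limUnder atTop fun n => S.approx n i z

theorem tendsto_approx : Tendsto (fun n => S.approx n i z) atTop (𝓝 (S.limit i z)) :=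
  (cauchySeq_of_dist_le_of_summable _ (fun n => S.dist_approx_succ_le n i z)
    (S.summable_err.mul_left _)).tendsto_limUnder

theorem dist_approx_limit_le : dist (S.approx n i z) (S.limit i z) ≤ |(i : ℝ)| * S.tail n :=
  (dist_le_tsum_of_dist_le_of_tendsto _ (fun n => S.dist_approx_succ_le n i z)
    (S.summable_err.mul_left _) (S.tendsto_approx i z) n).trans_eq tsum_mul_left

theorem tendstoUniformly_approx : TendstoUniformly (S.approx · i) (S.limit i) atTop := by
  rw [Metric.tendstoUniformly_iff]
  intro ε hε
  have hlim : Tendsto (fun n => |(i : ℝ)| * S.tail n) atTop (𝓝 0) := by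
    simpa using S.tendsto_tail.const_mul |(i : ℝ)|
  filter_upwards [hlim.eventually_lt_const hε] with n hn z
  rw [dist_comm]
  exact (S.dist_approx_limit_le n i z).trans_lt hn

theorem continuous_limit : Continuous (S.limit i) :=
  (S.tendstoUniformly_approx i).continuous (.of_forall fun n => S.continuous_approx n i)

theorem limit_add : S.limit (i + j) z = S.limit i (S.limit j z) := by
  refine tendsto_nhds_unique (S.tendsto_approx (i + j) z) ?_
  simp only [approx_add]
  exact (S.tendstoUniformly_approx i).tendsto_comp (S.continuous_limit i).continuousAt
    (S.tendsto_approx j z)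

theorem limit_zero : S.limit 0 z = z :=
  tendsto_nhds_unique (S.tendsto_approx 0 z) (by simp only [approx_zero, tendsto_const_nhds_iff])

theorem iterate_limit_one (m : ℕ) : (S.limit 1)^[m] z = S.limit m z := by
  induction m generalizing z with
  | zero => simp [limit_zero]
  | succ m ih => rw [Function.iterate_succ_apply, ih, ← limit_add, Nat.cast_succ]

theorem leftInverse_limit : Function.LeftInverse (S.limit (-i)) (S.limit i) := fun z => by
  rw [← limit_add, neg_add_cancel, limit_zero]

theorem bijective_limit : Function.Bijective (S.limit i) :=
  Function.bijective_iff_has_inverse.2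
    ⟨S.limit (-i), S.leftInverse_limit i, fun z => by simpa using S.leftInverse_limit (-i) z⟩

theorem invFun_limit : Function.invFun (S.limit i) = S.limit (-i) := by
  funext z
  apply (S.bijective_limit i).1
  rw [Function.invFun_eq ((S.bijective_limit i).2 z)]
  simpa using (S.leftInverse_limit (-i) z).symm

theorem measurePreserving_limit : MeasurePreserving (S.limit i) volume volume :=
  measurePreserving_of_tendsto (S.measurePreserving_approx · i) (S.tendsto_approx i)

/-- The difference of lifts of `T_{n+1}ⁱ` and `T_nⁱ`. -/
def liftIncrement (i : ℤ) (n : ℕ) : ℝ × ℝ → ℝ × ℝ :=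
  (S.stage n).perturbation (i * S.alpha n) i

/-- A lift of `Tⁱ`, obtained by summing the increments of lifts of `T_nⁱ`. -/
def limitLift (i : ℤ) (p : ℝ × ℝ) : ℝ × ℝ :=
  p + (i * S.alpha 0, 0) + ∑' n, S.liftIncrement i n p

theorem torusProj_liftIncrement (p : ℝ × ℝ) : torusProj (S.liftIncrement i n p) =
    S.approx (n + 1) i (torusProj p) - S.approx n i (torusProj p) := by
  rw [liftIncrement, Stage.perturbation, torusProj_sub, (S.stage n).isLiftOf_lift,
    (S.stage n).isLiftOf_lift, torusProj_add, torusProj_add, (S.stage n).isLiftOf_liftInv,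
    approx_succ_eq, approx, alpha_succ, mul_add, N_succ]
  simp only [torusProj, N, Stage.N, Nat.cast_pow, Nat.cast_ofNat, AddCircle.coe_zero]
  rfl

theorem contDiff_liftIncrement : ContDiff ℝ (∞ : ℕ∞ω) (S.liftIncrement i n) := by
  have hlift : ContDiff ℝ ∞ (S.stage n).lift := (S.stage n).lift_bounded.1 3 le_rfl
  have hinv : ContDiff ℝ ∞ (S.stage n).liftInv := (S.stage n).liftInv_bounded.1 3 le_rfl
  exact (hlift.comp (hinv.add contDiff_const)).sub (hlift.comp (hinv.add contDiff_const))

variable {i}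

theorem norm_iteratedFDeriv_liftIncrement_le (hi : |(i : ℝ)| ≤ 1) {k n : ℕ} (hk : k < n)
    (p : ℝ × ℝ) : ‖iteratedFDeriv ℝ k (S.liftIncrement i n) p‖ ≤ (1 / 2) ^ n :=
  (S.good n).norm_iteratedFDeriv_perturbation_le _ _ hi k hk p

theorem summable_liftIncrement (hi : |(i : ℝ)| ≤ 1) (p : ℝ × ℝ) :
    Summable fun n => S.liftIncrement i n p := by
  refine .of_norm_bounded_eventually_nat summable_geometric_two ?_
  filter_upwards [eventually_gt_atTop 0] with n hn
  simpa using S.norm_iteratedFDeriv_liftIncrement_le hi hn p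

theorem contDiff_limitLift (hi : |(i : ℝ)| ≤ 1) : ContDiff ℝ (∞ : ℕ∞ω) (S.limitLift i) := by
  refine (contDiff_id.add contDiff_const).add ?_
  refine contDiff_tsum_of_eventually (v := fun _ n => (1 / 2 : ℝ) ^ n)
    (S.contDiff_liftIncrement · i) (fun _ _ => summable_geometric_two) fun k _ => ?_
  rw [Nat.cofinite_eq_atTop]
  filter_upwards [eventually_gt_atTop k] with n hn p
  exact S.norm_iteratedFDeriv_liftIncrement_le hi hn p

theorem isLiftOf_limitLift (hi : |(i : ℝ)| ≤ 1) : IsLiftOf (S.limitLift i) (S.limit i) := by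
  intro p
  have hpartial : ∀ n, torusProj (p + (i * S.alpha 0, 0) +
      ∑ k ∈ Finset.range n, S.liftIncrement i k p) = S.approx n i (torusProj p) := by
    intro n
    induction n with
    | zero =>
      rw [Finset.sum_range_zero, add_zero, torusProj_add, approx, H_zero,
        show (S.H 0).symm (torusProj p) = torusProj p by rw [Homeomorph.symm_apply_eq, H_zero]]
      rfl
    | succ n ih =>
      rw [Finset.sum_range_succ, ← add_assoc, torusProj_add, ih, torusProj_liftIncrement,
        add_sub_cancel]
  have hsum := (S.summable_liftIncrement hi p).hasSum.tendsto_sum_nat.const_add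
    (p + (i * S.alpha 0, 0))
  refine tendsto_nhds_unique ((continuous_torusProj.tendsto _).comp hsum) ?_
  simpa only [Function.comp_def, hpartial] using S.tendsto_approx i (torusProj p)

theorem isCkTorusDiffeo_limit : IsCkTorusDiffeo ⊤ (S.limit 1) := by
  refine ⟨S.bijective_limit 1, ⟨_, S.contDiff_limitLift (by simp), S.isLiftOf_limitLift (by simp)⟩,
    ⟨_, S.contDiff_limitLift (i := -1) (by simp), ?_⟩⟩
  rw [invFun_limit]
  exact S.isLiftOf_limitLift (by simp)

end AnosovKatok

end Limit

section UniqueErgodicity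

theorem birkhoffSum_iterate_of_isPeriodicPt {α M : Type*} [AddCommGroup M] {P : α → α} {N : ℕ}
    {x : α} (hx : Function.IsPeriodicPt P N x) (f : α → M) (j : ℕ) :
    birkhoffSum P f N (P^[j] x) = birkhoffSum P f N x := by
  induction j with
  | zero => rfl
  | succ j ih =>
    rw [← ih, Function.iterate_succ_apply', ← sub_eq_zero, birkhoffSum_apply_sub_birkhoffSum,
      (hx.apply_iterate j).eq, sub_self]

theorem abs_birkhoffSum_sub_le {X : Type*} [PseudoMetricSpace X] {f : X → ℝ} {ε δ : ℝ}
    (hf : ∀ a b, dist a b ≤ δ → |f a - f b| ≤ ε) {P Q : X → X} {N : ℕ} {x y : X}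
    (hxy : ∀ i < N, dist (P^[i] x) (Q^[i] y) ≤ δ) :
    |birkhoffSum P f N x - birkhoffSum Q f N y| ≤ N * ε := by
  rw [birkhoffSum, birkhoffSum, ← Finset.sum_sub_distrib]
  refine (Finset.abs_sum_le_sum_abs _ _).trans ?_
  simpa using Finset.sum_le_card_nsmul _ _ ε fun i hi => hf _ _ (hxy i (Finset.mem_range.1 hi))

theorem abs_natCast_mul_integral_sub_le {X : Type*} [MeasurableSpace X] {μ : Measure X}
    [IsProbabilityMeasure μ] {T : X → X} (hT : MeasurePreserving T μ μ) {f : X → ℝ}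
    (hf : Integrable f μ) {N : ℕ} {c C : ℝ} (h : ∀ x, |birkhoffSum T f N x - c| ≤ C) :
    |N * ∫ x, f x ∂μ - c| ≤ C := by
  have hint : ∀ i, Integrable (fun x => f (T^[i] x)) μ := fun i =>
    (hT.iterate i).integrable_comp_of_integrable hf
  have hinv : ∀ i, ∫ x, f (T^[i] x) ∂μ = ∫ x, f x ∂μ := fun i => by
    have hmap := (hT.iterate i).map_eq
    conv_rhs => rw [← hmap]
    exact (integral_map (hT.iterate i).aemeasurable (by rw [hmap]; exact hf.1)).symm
  have hsum : ∫ x, birkhoffSum T f N x ∂μ = N * ∫ x, f x ∂μ := by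
    simp only [birkhoffSum, integral_finsetSum _ fun i _ => hint i, hinv, Finset.sum_const,
      Finset.card_range, nsmul_eq_mul]
  have hbirk : Integrable (birkhoffSum T f N) μ := integrable_finsetSum _ fun i _ => hint i
  calc |N * ∫ x, f x ∂μ - c| = ‖∫ x, (birkhoffSum T f N x - c) ∂μ‖ := by
        rw [integral_sub hbirk (integrable_const c), hsum, integral_const]; simp
    _ ≤ C := by
        simpa using norm_integral_le_of_norm_le_const (μ := μ)
          (f := fun x => birkhoffSum T f N x - c) (.of_forall h)

-- Birkhoff sums over a period are constant along the periodic orbits, which are all close to each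
-- other up to a shift of time; so the Birkhoff averages of `T` are almost constant.
theorem eq_of_measurePreserving_of_periodic_approx {X : Type*} [PseudoMetricSpace X]
    [CompactSpace X] [MeasurableSpace X] [BorelSpace X] {T : X → X}
    (hT : ∀ δ > 0, ∃ (P : X → X) (N : ℕ), 0 < N ∧ (∀ x, Function.IsPeriodicPt P N x) ∧
      (∀ x, ∀ i < N, dist (T^[i] x) (P^[i] x) ≤ δ) ∧
      ∀ x y, ∃ j, ∀ i, dist (P^[i] (P^[j] x)) (P^[i] y) ≤ δ)
    {μ ν : Measure X} [IsProbabilityMeasure μ] [IsProbabilityMeasure ν]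
    (hμ : MeasurePreserving T μ μ) (hν : MeasurePreserving T ν ν) : μ = ν := by
  obtain ⟨x₀⟩ := nonempty_of_isProbabilityMeasure μ
  refine ext_of_forall_integral_eq_of_IsFiniteMeasure fun f => eq_of_forall_dist_le fun ε hε => ?_
  obtain ⟨δ, hδ, hf⟩ := Metric.uniformContinuous_iff.1
    (CompactSpace.uniformContinuous_of_continuous f.continuous) (ε / 6) (by positivity)
  have hf' : ∀ a b, dist a b ≤ δ / 2 → |f a - f b| ≤ ε / 6 := fun a b hab =>
    (hf (hab.trans_lt (half_lt_self hδ))).le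
  obtain ⟨P, N, hN, hper, hTP, hshift⟩ := hT (δ / 2) (half_pos hδ)
  have hosc : ∀ x, |birkhoffSum T f N x - birkhoffSum T f N x₀| ≤ N * (ε / 2) := fun x => by
    obtain ⟨j, hj⟩ := hshift x x₀
    have hxP := abs_birkhoffSum_sub_le hf' (hTP x)
    have hx₀P := abs_birkhoffSum_sub_le hf' (hTP x₀)
    have hPP := abs_birkhoffSum_sub_le (N := N) hf' fun i _ => hj i
    rw [birkhoffSum_iterate_of_isPeriodicPt (hper x)] at hPP
    rw [abs_le] at *
    constructor <;> linarith
  have hμf := abs_natCast_mul_integral_sub_le hμ (f.integrable μ) hosc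
  have hνf := abs_natCast_mul_integral_sub_le hν (f.integrable ν) hosc
  rw [abs_sub_comm] at hνf
  have hNpos : (0 : ℝ) < N := by exact_mod_cast hN
  refine le_of_mul_le_mul_left ?_ hNpos
  calc N * dist (∫ x, f x ∂μ) (∫ x, f x ∂ν) = |N * ∫ x, f x ∂μ - N * ∫ x, f x ∂ν| := by
        rw [Real.dist_eq, ← mul_sub, abs_mul, abs_of_pos hNpos]
    _ ≤ N * (ε / 2) + N * (ε / 2) := (abs_sub_le _ _ _).trans (add_le_add hμf hνf)
    _ = N * ε := by ring

theorem exists_natCast_mul_modEq {M p : ℕ} (hM : M ≠ 0) (hp : p.Coprime M) (q : ℤ) :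
    ∃ i < M, i * p ≡ q [ZMOD M] := by
  have : NeZero M := ⟨hM⟩
  refine ⟨((q : ZMod M) * (p : ZMod M)⁻¹).val, ZMod.val_lt _,
    (ZMod.intCast_eq_intCast_iff _ _ M).1 ?_⟩
  push_cast
  rw [ZMod.natCast_zmod_val, mul_assoc, mul_comm _ (p : ZMod M), ZMod.coe_mul_inv_eq_one p hp,
    mul_one]

theorem abs_floor_mul_div_sub_le {N : ℝ} (hN : 0 < N) (x : ℝ) : |⌊N * x⌋ / N - x| ≤ 1 / N := by
  rw [div_sub' hN.ne', abs_div, abs_of_pos hN]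
  gcongr
  rw [abs_le]
  constructor <;> linarith [Int.floor_le (N * x), Int.lt_floor_add_one (N * x)]

-- Write `q = k + M j`: the residue `k` is chosen for the second coordinate, then `j` for the first.
theorem exists_norm_coe_div_sub_le {N M : ℕ} (hN : 0 < N) (hM : 0 < M) (D : Torus2) :
    ∃ q : ℤ, ‖((q / (N * M) : ℝ) : Torus1) - D.1‖ ≤ 1 / N ∧
      ‖N • ((q / (N * M) : ℝ) : Torus1) - D.2‖ ≤ 1 / M := by
  obtain ⟨x, hx, -⟩ := exists_coe_eq_and_abs_eq_norm D.1
  obtain ⟨y, hy, -⟩ := exists_coe_eq_and_abs_eq_norm D.2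
  have hN' : (0 : ℝ) < N := by exact_mod_cast hN
  have hM' : (0 : ℝ) < M := by exact_mod_cast hM
  set k : ℤ := ⌊(M : ℝ) * y⌋
  set j : ℤ := ⌊(N : ℝ) * (x - k / (N * M))⌋
  refine ⟨k + M * j, ?_, ?_⟩
  · have hq : ((k + M * j : ℤ) : ℝ) / (N * M) - x = j / N - (x - k / (N * M)) := by
      push_cast; field_simp; ring
    rw [← hx, ← AddCircle.coe_sub, hq]
    exact (norm_coe_le_abs _).trans (abs_floor_mul_div_sub_le hN' _)
  · have hq : (N : ℝ) * (((k + M * j : ℤ) : ℝ) / (N * M)) - y = j + (k / M - y) := by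
      push_cast; field_simp; ring
    rw [← hy, ← coe_natCast_mul, ← AddCircle.coe_sub, hq, AddCircle.coe_add, coe_intCast, zero_add]
    exact (norm_coe_le_abs _).trans (abs_floor_mul_div_sub_le hM' _)

namespace AnosovKatok

variable (S : AnosovKatok) (n : ℕ) (z z' : Torus2)

theorem exists_coe_mul_alpha_eq (q : ℤ) :
    ∃ i < S.N (n + 1),
      ((i * S.alpha (n + 1) : ℝ) : Torus1) = ((q / S.N (n + 1) : ℝ) : Torus1) := by
  obtain ⟨p, hp, hα⟩ := S.exists_odd_eq_N_mul_alpha (n + 1)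
  have hcop : p.Coprime (S.N (n + 1)) := by
    rw [N_succ]; exact hp.coprime_two_right.pow_right _
  obtain ⟨i, hiN, hi⟩ := exists_natCast_mul_modEq (S.N_pos _).ne' hcop q
  obtain ⟨c, hc⟩ := hi.symm.dvd
  have hc' : (i * p - q : ℝ) = S.N (n + 1) * c := by exact_mod_cast hc
  have hsub : (i * S.alpha (n + 1) - q / S.N (n + 1) : ℝ) = c := by
    have := S.N_cast_pos (n + 1)
    field_simp
    linear_combination hc' + (i : ℝ) * hα
  refine ⟨i, hiN, sub_eq_zero.1 ?_⟩
  rw [← AddCircle.coe_sub, hsub, coe_intCast]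

theorem exists_norm_mul_alpha_sub_le (D : Torus2) : ∃ i < S.N (n + 1),
    ‖((i * S.alpha (n + 1) : ℝ) : Torus1) - D.1‖ ≤ 1 / S.N n ∧
      ‖S.N n • ((i * S.alpha (n + 1) : ℝ) : Torus1) - D.2‖ ≤ S.N n / S.N (n + 1) := by
  obtain ⟨d, -, hd⟩ := S.exists_N_succ_eq n
  have hdcast : (S.N (n + 1) : ℝ) = S.N n * (2 ^ d : ℕ) := by exact_mod_cast hd
  obtain ⟨q, hfst, hsnd⟩ := exists_norm_coe_div_sub_le (S.N_pos n) (Nat.two_pow_pos d) D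
  obtain ⟨i, hiN, hi⟩ := S.exists_coe_mul_alpha_eq n q
  rw [← hdcast, ← hi] at hfst hsnd
  refine ⟨i, hiN, hfst, hsnd.trans_eq ?_⟩
  have := S.N_cast_pos n
  rw [hdcast]; field_simp

theorem dist_H_add_horizontal_le_of_norm_le (u : Torus2) {s : Torus1} (hs : ‖s‖ ≤ 1 / S.N n) :
    dist (S.H n (u + (s, 0))) (S.H n u) ≤ (1 / 2) ^ (n + 4) := by
  have := S.N_cast_pos n
  calc _ ≤ S.N n * (1 / 2) ^ (n + 4) * ‖s‖ := S.dist_H_add_horizontal_le n u s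
    _ ≤ S.N n * (1 / 2) ^ (n + 4) * (1 / S.N n) := by gcongr
    _ = (1 / 2) ^ (n + 4) := by field_simp

theorem dist_H_add_le (u : Torus2) {s w : Torus1} (hs : ‖s‖ ≤ 1 / S.N n)
    (hw : ‖w‖ ≤ S.N n / S.N (n + 1)) :
    dist (S.H n (u + (s, w))) (S.H n u) ≤ (1 / 2) ^ (n + 3) := by
  have hvert : dist (S.H n (u + (s, w))) (S.H n (u + (s, 0))) ≤ (1 / 2) ^ (n + 4) := by
    refine (S.dist_H_le n _ _).trans ?_
    rw [dist_add_left, dist_eq_norm, Prod.mk_sub_mk, sub_self, sub_zero, Prod.norm_def, norm_zero,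
      max_eq_right (norm_nonneg w)]
    calc S.K n * ‖w‖ ≤ S.err n := by
          rw [err, mul_div_assoc]; exact mul_le_mul_of_nonneg_left hw (S.K_pos n).le
      _ ≤ (1 / 2) ^ (n + 4) := (S.err_le n).trans
          (pow_le_pow_of_le_one (by norm_num) (by norm_num) (by omega))
  calc _ ≤ (1 / 2 : ℝ) ^ (n + 4) + (1 / 2) ^ (n + 4) :=
        (dist_triangle _ _ _).trans
          (add_le_add hvert (S.dist_H_add_horizontal_le_of_norm_le n u hs))
    _ = (1 / 2) ^ (n + 3) := by ring

theorem iterate_approx_one (m : ℕ) : (S.approx n 1)^[m] z = S.approx n m z := by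
  induction m generalizing z with
  | zero => simp [approx_zero]
  | succ m ih => rw [Function.iterate_succ_apply, ih, ← approx_add, Nat.cast_succ]

theorem isPeriodicPt_approx : Function.IsPeriodicPt (S.approx n 1) (S.N n) z := by
  obtain ⟨p, -, hp⟩ := S.exists_odd_eq_N_mul_alpha n
  have hcoe : ((p : ℝ) : Torus1) = 0 := by exact_mod_cast coe_intCast p
  rw [Function.IsPeriodicPt, Function.IsFixedPt, iterate_approx_one, approx, Int.cast_natCast, hp,
    hcoe, ← Prod.zero_eq_mk, add_zero, Homeomorph.apply_symm_apply]

theorem exists_forall_dist_approx_H_add_le (u v : Torus2) : ∃ j < S.N (n + 1), ∀ c,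
    dist (S.approx (n + 1) j (S.H n (u + c))) (S.H n (v + c)) ≤ (1 / 2) ^ (n + 3) := by
  obtain ⟨j, hj, hs, hw⟩ := S.exists_norm_mul_alpha_sub_le n (v - u)
  refine ⟨j, hj, fun c => ?_⟩
  convert S.dist_H_add_le n (v + c) hs hw using 2
  simp only [approx, H_succ_symm_add_horizontal, Homeomorph.symm_apply_apply, Int.cast_natCast]
  congr 1
  ext <;> simp only [Prod.fst_add, Prod.snd_add, Prod.fst_sub, Prod.snd_sub] <;> abel

theorem exists_forall_dist_approx_le : ∃ j : ℕ, ∀ i : ℤ,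
    dist (S.approx (n + 1) i (S.approx (n + 1) j z)) (S.approx (n + 1) i z') ≤
      (1 / 2) ^ (n + 3) := by
  obtain ⟨j, -, hj⟩ := S.exists_forall_dist_approx_H_add_le n ((S.H n).symm z) ((S.H n).symm z')
  refine ⟨j, fun i => ?_⟩
  have hshift : ∀ z, S.approx (n + 1) i z = S.H n ((S.H n).symm z +
      (((i * S.alpha (n + 1) : ℝ) : Torus1), S.N n • ((i * S.alpha (n + 1) : ℝ) : Torus1))) :=
    fun z => S.H_succ_symm_add_horizontal n z _
  rw [← approx_add, add_comm i, approx_add, hshift z, hshift z']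
  exact hj _

theorem dist_limit_approx_le {i : ℕ} (hi : i ≤ S.N n) :
    dist (S.limit i z) (S.approx n i z) ≤ (1 / 2) ^ (n + 4) := by
  have hN := S.N_cast_pos n
  have hi' : |((i : ℤ) : ℝ)| ≤ S.N n := by simpa using hi
  rw [dist_comm]
  calc _ ≤ |((i : ℤ) : ℝ)| * S.tail n := S.dist_approx_limit_le n i z
    _ ≤ S.N n * ((1 / 2) ^ (n + 4) / S.N n) :=
        mul_le_mul hi' (S.tail_le_div_N n) (S.tail_nonneg n) hN.le
    _ = (1 / 2) ^ (n + 4) := by field_simp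

theorem uniquelyErgodicWithVolume_limit : UniquelyErgodicWithVolume (S.limit 1) := by
  refine ⟨S.measurePreserving_limit 1, fun μ _ hμ =>
    eq_of_measurePreserving_of_periodic_approx (fun δ hδ => ?_) hμ (S.measurePreserving_limit 1)⟩
  obtain ⟨n, hn⟩ := exists_pow_lt_of_lt_one hδ (show (1 / 2 : ℝ) < 1 by norm_num)
  have hpow : ∀ k, n ≤ k → (1 / 2 : ℝ) ^ k ≤ δ := fun k hk =>
    (pow_le_pow_of_le_one (by norm_num) (by norm_num) hk).trans hn.le
  refine ⟨S.approx (n + 1) 1, S.N (n + 1), S.N_pos _, S.isPeriodicPt_approx _, ?_, ?_⟩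
  · intro z i hi
    rw [iterate_limit_one, iterate_approx_one]
    exact (S.dist_limit_approx_le (n + 1) z hi.le).trans (hpow _ (by omega))
  · intro z z'
    obtain ⟨j, hj⟩ := S.exists_forall_dist_approx_le n z z'
    refine ⟨j, fun i => ?_⟩
    simp only [iterate_approx_one]
    exact (hj i).trans (hpow _ (by omega))

end AnosovKatok

end UniqueErgodicity

section Isomorphism

theorem irrational_of_forall_exists_int_mul_sub_lt {x : ℝ}
    (h : ∀ ε > 0, ∃ q p : ℤ, 0 < q * x - p ∧ q * x - p < ε) : Irrational x := by
  rintro ⟨r, rfl⟩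
  have hden : (0 : ℝ) < r.den := by exact_mod_cast r.den_pos
  obtain ⟨q, p, hpos, hlt⟩ := h (1 / r.den) (by positivity)
  have hint : ((q * r.num - p * r.den : ℤ) : ℝ) = r.den * (q * r - p) := by
    have hr : (r.den : ℝ) * r = r.num := by exact_mod_cast Rat.den_mul_eq_num r
    push_cast
    linear_combination -(q : ℝ) * hr
  have h0 : 0 < q * r.num - p * r.den := by
    exact_mod_cast hint ▸ mul_pos hden hpos
  have h1 : q * r.num - p * r.den < 1 := by
    rw [lt_div_iff₀' hden, ← hint] at hlt
    exact_mod_cast hlt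
  omega

theorem isoToIrrationalRotation_of_ae_leftInverse {T : Torus2 → Torus2} {α : ℝ}
    (hα : Irrational α) (hT : MeasurePreserving T volume volume) {ψ : Torus2 → Torus1}
    (hψ : MeasurePreserving ψ volume volume) {φ : Torus1 → Torus2} (hφ : Measurable φ)
    (hleft : ∀ᵐ z, φ (ψ z) = z) (hsemi : ∀ z, ψ (T z) = ψ z + (α : Torus1)) :
    IsoToIrrationalRotation T := by
  set A : Set Torus2 := {z | ∀ k, φ (ψ (T^[k] z)) = T^[k] z} with hA
  set B : Set Torus1 := {t | φ t ∈ A ∧ ψ (φ t) = t}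
  have hAmeas : MeasurableSet A := by
    rw [hA, ofPred_forall]
    exact .iInter fun k => measurableSet_eq_fun
      (hφ.comp (hψ.measurable.comp (hT.measurable.iterate k))) (hT.measurable.iterate k)
  have hBmeas : MeasurableSet B :=
    (hφ hAmeas).inter (measurableSet_eq_fun (hψ.measurable.comp hφ) measurable_id)
  have hAnull : volume Aᶜ = 0 :=
    ae_all_iff.2 fun k => (hT.iterate k).quasiMeasurePreserving.ae hleft
  have hAT : MapsTo T A A := fun z hz k => hz (k + 1)
  have hAB : MapsTo ψ A B := fun z hz => by
    have hz0 : φ (ψ z) = z := hz 0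
    exact ⟨hz0.symm ▸ hz, congrArg ψ hz0⟩
  refine ⟨α, hα, A, B, ψ, φ, hAmeas, hBmeas, hAnull, ?_, hAT, fun t ht => ?_, hψ.measurable, hφ,
    hAB, fun t ht => ht.1, fun z hz => hz 0, fun t ht => ht.2, hψ.map_eq, fun z _ => hsemi z⟩
  · rw [← hψ.measure_preimage hBmeas.compl.nullMeasurableSet]
    exact measure_mono_null (fun z hz hzA => hz (hAB hzA)) hAnull
  · have hmem := hAB (hAT ht.1)
    rwa [hsemi, ht.2] at hmem

namespace AnosovKatok

variable (S : AnosovKatok) (n : ℕ) (z : Torus2)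

theorem one_div_N_add_le (k : ℕ) : 1 / (S.N (n + k) : ℝ) ≤ 1 / S.N n * (1 / 2) ^ k := by
  induction k with
  | zero => simp
  | succ k ih =>
    have hdouble : (2 : ℝ) * S.N (n + k) ≤ S.N (n + k + 1) := by
      exact_mod_cast S.two_mul_N_le (n + k)
    have := S.N_cast_pos (n + k)
    calc 1 / (S.N (n + k + 1) : ℝ) ≤ 1 / (2 * S.N (n + k)) := by gcongr
      _ = 1 / S.N (n + k) * (1 / 2) := by field_simp
      _ ≤ 1 / S.N n * (1 / 2) ^ k * (1 / 2) := by gcongr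
      _ = 1 / S.N n * (1 / 2) ^ (k + 1) := by ring

theorem summable_one_div_N_add : Summable fun k => 1 / (S.N (n + k) : ℝ) :=
  .of_nonneg_of_le (fun _ => by positivity) (S.one_div_N_add_le n)
    (summable_geometric_two.mul_left _)

theorem tsum_one_div_N_add_le : ∑' k, 1 / (S.N (n + k) : ℝ) ≤ 2 / S.N n := by
  have hgeom := hasSum_geometric_two.mul_left (1 / (S.N n : ℝ))
  calc _ ≤ _ := (S.summable_one_div_N_add n).tsum_le_tsum (S.one_div_N_add_le n) hgeom.summable
    _ = 2 / S.N n := by rw [hgeom.tsum_eq]; ring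

theorem summable_one_div_N : Summable fun k => 1 / (S.N k : ℝ) := by
  simpa only [zero_add] using S.summable_one_div_N_add 0

/-- The rotation number `α = ∑ₖ 1 / N_k` of the limit diffeomorphism. -/
def rotationNumber : ℝ := ∑' k, 1 / (S.N k : ℝ)

theorem tendsto_alpha : Tendsto S.alpha atTop (𝓝 S.rotationNumber) :=
  (tendsto_add_atTop_iff_nat 1).2 S.summable_one_div_N.hasSum.tendsto_sum_nat

theorem rotationNumber_sub_alpha :
    S.rotationNumber - S.alpha n = ∑' k, 1 / (S.N (n + 1 + k) : ℝ) := by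
  rw [sub_eq_iff_eq_add', rotationNumber, alpha,
    ← S.summable_one_div_N.sum_add_tsum_nat_add (n + 1)]
  simp only [add_comm]

theorem N_div_N_succ_le : S.N n / S.N (n + 1) ≤ (1 / 2 : ℝ) ^ (n + 5) := by
  refine le_trans ?_ (S.err_le n)
  rw [err, mul_div_assoc]
  exact le_mul_of_one_le_left (by positivity) (S.one_le_K n)

theorem irrational_rotationNumber : Irrational S.rotationNumber := by
  refine irrational_of_forall_exists_int_mul_sub_lt fun ε hε => ?_
  obtain ⟨n, hn⟩ := exists_pow_lt_of_lt_one hε (show (1 / 2 : ℝ) < 1 by norm_num)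
  obtain ⟨p, -, hp⟩ := S.exists_odd_eq_N_mul_alpha n
  have hN := S.N_cast_pos n
  have hremainder : ((S.N n : ℤ) : ℝ) * S.rotationNumber - (p : ℤ) =
      S.N n * ∑' k, 1 / (S.N (n + 1 + k) : ℝ) := by
    rw [← rotationNumber_sub_alpha, mul_sub, hp, Int.cast_natCast, Int.cast_natCast]
  refine ⟨S.N n, p, ?_, ?_⟩ <;> rw [hremainder]
  · exact mul_pos hN ((S.summable_one_div_N_add (n + 1)).tsum_pos (fun _ => by positivity) 0
      (one_div_pos.2 (S.N_cast_pos _)))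
  · calc S.N n * ∑' k, 1 / (S.N (n + 1 + k) : ℝ) ≤ S.N n * (2 / S.N (n + 1)) :=
          mul_le_mul_of_nonneg_left (S.tsum_one_div_N_add_le (n + 1)) hN.le
      _ = 2 * (S.N n / S.N (n + 1)) := by ring
      _ ≤ 2 * (1 / 2) ^ (n + 5) := mul_le_mul_of_nonneg_left (S.N_div_N_succ_le n) zero_le_two
      _ = (1 / 2) ^ n * (1 / 16) := by ring
      _ < ε := by linarith [show (0 : ℝ) < (1 / 2) ^ n by positivity]

/-- The horizontal coordinate of `H_n⁻¹`, which conjugates `T_n` to the rotation by `α_n`. -/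
def factorApprox (z : Torus2) : Torus1 := ((S.H n).symm z).1

theorem factorApprox_approx (i : ℤ) : S.factorApprox n (S.approx n i z) =
    S.factorApprox n z + ((i * S.alpha n : ℝ) : Torus1) := by
  rw [factorApprox, approx, Homeomorph.symm_apply_apply, Prod.fst_add, factorApprox]

theorem continuous_factorApprox : Continuous (S.factorApprox n) :=
  continuous_fst.comp (S.H n).symm.continuous

theorem measurePreserving_H_symm : MeasurePreserving (S.H n).symm volume volume :=
  (S.measurePreserving_H n).symm (S.H n).toMeasurableEquiv

theorem measurePreserving_factorApprox : MeasurePreserving (S.factorApprox n) volume volume :=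
  measurePreserving_fst.comp (S.measurePreserving_H_symm n)

theorem norm_coe_inv_mul_circleSawtooth_le (y : Torus1) :
    ‖(((S.N n : ℝ)⁻¹ * circleSawtooth (S.three_le_L n) y : ℝ) : Torus1)‖ ≤ 1 / S.N n := by
  refine (norm_coe_le_abs _).trans ?_
  rw [abs_mul, abs_of_nonneg (by positivity), ← one_div]
  exact mul_le_of_le_one_right (by positivity) (abs_circleSawtooth_le_one _ y)

theorem dist_factorApprox_succ_le :
    dist (S.factorApprox n z) (S.factorApprox (n + 1) z) ≤ 1 / S.N n := by
  rw [factorApprox, factorApprox, H_symm_succ, h_symm_apply, dist_comm, dist_eq_norm,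
    add_sub_cancel_left]
  exact S.norm_coe_inv_mul_circleSawtooth_le n _

/-- The factor map `lim_n π₁ ∘ H_n⁻¹` from the limit diffeomorphism to the rotation. -/
def factor (z : Torus2) : Torus1 := limUnder atTop fun n => S.factorApprox n z

theorem tendsto_factorApprox : Tendsto (S.factorApprox · z) atTop (𝓝 (S.factor z)) :=
  (cauchySeq_of_dist_le_of_summable _ (S.dist_factorApprox_succ_le · z)
    S.summable_one_div_N).tendsto_limUnder

theorem dist_factorApprox_factor_le : dist (S.factorApprox n z) (S.factor z) ≤ 2 / S.N n :=
  (dist_le_tsum_of_dist_le_of_tendsto _ (S.dist_factorApprox_succ_le · z) S.summable_one_div_N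
    (S.tendsto_factorApprox z) n).trans (S.tsum_one_div_N_add_le n)

theorem tendstoUniformly_factorApprox : TendstoUniformly S.factorApprox S.factor atTop := by
  have hlim : Tendsto (fun n => 2 / (S.N n : ℝ)) atTop (𝓝 0) := by
    simpa only [mul_one_div, mul_zero] using S.summable_one_div_N.tendsto_atTop_zero.const_mul 2
  refine Metric.tendstoUniformly_iff.2 fun ε hε => ?_
  filter_upwards [hlim.eventually_lt_const hε] with n hn z
  rw [dist_comm]
  exact (S.dist_factorApprox_factor_le n z).trans_lt hn

theorem continuous_factor : Continuous S.factor :=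
  S.tendstoUniformly_factorApprox.continuous (.of_forall S.continuous_factorApprox)

theorem measurePreserving_factor : MeasurePreserving S.factor volume volume :=
  measurePreserving_of_tendsto S.measurePreserving_factorApprox S.tendsto_factorApprox

theorem factor_limit_one : S.factor (S.limit 1 z) = S.factor z + (S.rotationNumber : Torus1) := by
  have hlim : Tendsto (fun n => S.factorApprox n (S.approx n 1 z)) atTop
      (𝓝 (S.factor (S.limit 1 z))) :=
    S.tendstoUniformly_factorApprox.tendsto_comp S.continuous_factor.continuousAt
      (S.tendsto_approx 1 z)
  simp only [factorApprox_approx, Int.cast_one, one_mul] at hlim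
  exact tendsto_nhds_unique hlim ((S.tendsto_factorApprox z).add
    (((AddCircle.continuous_mk' 1).tendsto _).comp S.tendsto_alpha))

/-- The points whose vertical coordinate under `H_{n+1}⁻¹` avoids the jump of the sawtooth. -/
def plateau : Set Torus2 := {p | 1 / (S.L n : ℝ) ≤ ‖((S.H (n + 1)).symm p).2‖}

theorem volume_compl_plateau_le : volume (S.plateau n)ᶜ ≤ ENNReal.ofReal (2 * (1 / 2) ^ n) := by
  have hpres : MeasurePreserving (fun p => ((S.H (n + 1)).symm p).2) volume volume :=
    measurePreserving_snd.comp (S.measurePreserving_H_symm (n + 1))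
  have hsub : (S.plateau n)ᶜ ⊆
      (fun p => ((S.H (n + 1)).symm p).2) ⁻¹' Metric.closedBall 0 (1 / (S.L n : ℝ)) := by
    intro p hp
    have hlt : ‖((S.H (n + 1)).symm p).2‖ < 1 / S.L n := not_le.1 hp
    simpa using hlt.le
  have hL : (2 : ℝ) ^ n ≤ S.L n := by exact_mod_cast S.two_pow_le_L n
  calc volume (S.plateau n)ᶜ ≤ volume (Metric.closedBall (0 : Torus1) (1 / (S.L n : ℝ))) := by
        rw [← hpres.measure_preimage Metric.isClosed_closedBall.nullMeasurableSet]
        exact measure_mono hsub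
    _ ≤ ENNReal.ofReal (2 * (1 / S.L n)) := by
        rw [AddCircle.volume_closedBall]
        exact ENNReal.ofReal_le_ofReal (min_le_right _ _)
    _ ≤ ENNReal.ofReal (2 * (1 / 2) ^ n) := by
        rw [div_pow, one_pow]
        gcongr

theorem ae_eventually_mem_plateau : ∀ᵐ p, ∀ᶠ n in atTop, p ∈ S.plateau n := by
  have hsum : ∑' n, volume (S.plateau n)ᶜ ≠ ⊤ :=
    ne_top_of_le_ne_top (summable_geometric_two.mul_left 2).tsum_ofReal_ne_top
      (ENNReal.tsum_le_tsum S.volume_compl_plateau_le)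
  filter_upwards [ae_eventually_notMem hsum] with p hp
  exact hp.mono fun n => not_notMem.1

/-- The image under `H_n` of the closed curve `y = N_n x + 1/2`, near which `h_n` maps everything
outside the jump of the sawtooth. -/
def sectionApprox (t : Torus1) : Torus2 := S.H n (t, S.N n • t + ((1 / 2 : ℝ) : Torus1))

theorem continuous_sectionApprox : Continuous (S.sectionApprox n) :=
  (S.H n).continuous.comp (by fun_prop)

theorem dist_sectionApprox_le (s t : Torus1) :
    dist (S.sectionApprox n s) (S.sectionApprox n t) ≤ S.K n * (S.N n * dist s t) := by
  refine (S.dist_H_le n _ _).trans (mul_le_mul_of_nonneg_left ?_ (S.K_pos n).le)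
  rw [Prod.dist_eq]
  refine max_le (le_mul_of_one_le_left dist_nonneg (S.one_le_N_cast n)) ?_
  simp only [dist_add_right]
  rw [dist_eq_norm, dist_eq_norm, ← nsmul_sub]
  exact norm_nsmul_le

variable {n z}

theorem dist_sectionApprox_factorApprox_succ_le (hz : z ∈ S.plateau n) :
    dist z (S.sectionApprox n (S.factorApprox (n + 1) z)) ≤ (1 / 2) ^ (n + 4) := by
  set q := (S.H (n + 1)).symm z with hq
  have hhq : S.h n q = (q.1, S.N n • q.1 + ((1 / 2 : ℝ) : Torus1)) +
      (-(((S.N n : ℝ)⁻¹ * circleSawtooth (S.three_le_L n) q.2 : ℝ) : Torus1), 0) := by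
    rw [h_apply, ← sub_coe_circleSawtooth (S.three_le_L n) hz]
    ext
    · simp only [Prod.fst_add]; abel
    · simp only [Prod.snd_add, ← hq]; abel
  have hzq : z = S.H n (S.h n q) := by rw [← H_succ, hq, Homeomorph.apply_symm_apply]
  have hdist := S.dist_H_add_horizontal_le_of_norm_le n
    (q.1, S.N n • q.1 + ((1 / 2 : ℝ) : Torus1))
    ((norm_neg _).trans_le (S.norm_coe_inv_mul_circleSawtooth_le n q.2))
  rwa [← hhq, ← hzq] at hdist

theorem dist_sectionApprox_factor_le (hz : z ∈ S.plateau n) :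
    dist z (S.sectionApprox n (S.factor z)) ≤ (1 / 2) ^ (n + 3) := by
  have hcurve : dist (S.sectionApprox n (S.factorApprox (n + 1) z))
      (S.sectionApprox n (S.factor z)) ≤ (1 / 2) ^ (n + 4) := by
    have := S.K_pos n
    calc _ ≤ S.K n * (S.N n * dist (S.factorApprox (n + 1) z) (S.factor z)) :=
          S.dist_sectionApprox_le n _ _
      _ ≤ S.K n * (S.N n * (2 / S.N (n + 1))) := by
          gcongr
          exact S.dist_factorApprox_factor_le (n + 1) z
      _ = 2 * S.err n := by rw [err]; ring
      _ ≤ 2 * (1 / 2) ^ (n + 5) := mul_le_mul_of_nonneg_left (S.err_le n) zero_le_two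
      _ = (1 / 2) ^ (n + 4) := by ring
  calc _ ≤ (1 / 2 : ℝ) ^ (n + 4) + (1 / 2) ^ (n + 4) := (dist_triangle _ _ _).trans
        (add_le_add (S.dist_sectionApprox_factorApprox_succ_le hz) hcurve)
    _ = (1 / 2) ^ (n + 3) := by ring

/-- The measurable section of the factor map obtained as the limit of the curves `sectionApprox`;
its values are meaningful only where that limit exists. -/
def factorSection (t : Torus1) : Torus2 := limUnder atTop fun n => S.sectionApprox n t

theorem measurable_factorSection : Measurable S.factorSection :=
  (StronglyMeasurable.limUnder fun n =>
    (S.continuous_sectionApprox n).stronglyMeasurable).measurable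

theorem ae_factorSection_factor : ∀ᵐ z, S.factorSection (S.factor z) = z := by
  filter_upwards [S.ae_eventually_mem_plateau] with z hz
  refine Tendsto.limUnder_eq (tendsto_iff_dist_tendsto_zero.2 (squeeze_zero'
    (.of_forall fun _ => dist_nonneg) (hz.mono fun n hn => ?_)
    ((tendsto_add_atTop_iff_nat 3).2 (tendsto_pow_atTop_nhds_zero_of_lt_one
      (show (0 : ℝ) ≤ 1 / 2 by norm_num) (by norm_num)))))
  rw [dist_comm]
  exact S.dist_sectionApprox_factor_le hn

theorem isoToIrrationalRotation_limit : IsoToIrrationalRotation (S.limit 1) :=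
  isoToIrrationalRotation_of_ae_leftInverse S.irrational_rotationNumber
    (S.measurePreserving_limit 1) S.measurePreserving_factor S.measurable_factorSection
    S.ae_factorSection_factor S.factor_limit_one

end AnosovKatok

end Isomorphism

section SlowEntropy

variable {X : Type*} [PseudoMetricSpace X] {T : X → X} {n : ℕ} {x y : X} {ε : ℝ}

theorem bowenDist_lt_iff (hε : 0 < ε) :
    bowenDist T n x y < ε ↔ ∀ i < n, dist (T^[i] x) (T^[i] y) < ε := by
  lift ε to ℝ≥0 using hε.le
  rw [bowenDist, NNReal.coe_lt_coe, Finset.sup_lt_iff (by exact_mod_cast hε)]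
  simp only [Finset.mem_range, ← NNReal.coe_lt_coe, coe_nndist]

theorem bowenCoverNum_le_card {F : Finset X} (hF : ∀ y, ∃ x ∈ F, bowenDist T n x y < ε) :
    bowenCoverNum T n ε ≤ F.card :=
  Nat.sInf_le ⟨F, rfl, hF⟩

theorem exists_finset_bowenDist_lt [CompactSpace X] (hT : Continuous T) (hε : 0 < ε) (n : ℕ) :
    ∃ F : Finset X, ∀ y, ∃ x ∈ F, bowenDist T n x y < ε := by
  have hopen : ∀ x, IsOpen {y | bowenDist T n x y < ε} := fun x => by
    simp only [bowenDist_lt_iff hε, ← Finset.mem_range, ofPred_forall]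
    exact isOpen_biInter_finset fun i _ =>
      isOpen_lt (continuous_const.dist (hT.iterate i)) continuous_const
  obtain ⟨F, hF⟩ := isCompact_univ.elim_finite_subcover _ hopen fun x _ =>
    mem_iUnion.2 ⟨x, (bowenDist_lt_iff hε).2 fun i _ => by rwa [dist_self]⟩
  exact ⟨F, fun y => by simpa using hF (mem_univ y)⟩

theorem card_le_bowenCoverNum [CompactSpace X] (hT : Continuous T) (hε : 0 < ε)
    {ι : Type*} {s : Finset ι} {q : ι → X}
    (hsep : ∀ a ∈ s, ∀ b ∈ s, a ≠ b → ∃ i < n, 2 * ε ≤ dist (T^[i] (q a)) (T^[i] (q b))) :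
    s.card ≤ bowenCoverNum T n ε := by
  obtain ⟨F₀, hF₀⟩ := exists_finset_bowenDist_lt hT hε n
  refine le_csInf ⟨_, F₀, rfl, hF₀⟩ ?_
  rintro _ ⟨F, rfl, hF⟩
  choose g hgF hg using hF
  refine Finset.card_le_card_of_injOn (g ∘ q) (fun _ _ => hgF _) fun a ha b hb hab => ?_
  by_contra hne
  obtain ⟨i, hi, hdist⟩ := hsep a ha b hb hne
  have hclose_a := (bowenDist_lt_iff hε).1 (hg (q a)) i hi
  have hclose_b := (bowenDist_lt_iff hε).1 (hg (q b)) i hi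
  rw [← show g (q a) = g (q b) from hab] at hclose_b
  linarith [dist_triangle_left (T^[i] (q a)) (T^[i] (q b)) (T^[i] (g (q a)))]

theorem limsup_div_ofReal_pos {u a : ℕ → ℝ} {c : ℝ} (hc : 0 < c) (ha : ∀ᶠ m in atTop, 0 < a m)
    (h : ∃ᶠ m in atTop, c * a m ≤ u m) :
    0 < atTop.limsup fun m => ENNReal.ofReal (u m) / ENNReal.ofReal (a m) := by
  refine (ENNReal.ofReal_pos.2 hc).trans_le (le_limsup_of_frequently_le ?_)
  refine (h.and_eventually ha).mono fun m ⟨hm, ham⟩ => ?_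
  rw [← ENNReal.ofReal_div_of_pos ham]
  exact ENNReal.ofReal_le_ofReal ((le_div_iff₀ ham).2 hm)

theorem limsup_div_ofReal_eq_zero {u a : ℕ → ℝ} (ha : ∀ᶠ m in atTop, 0 < a m)
    (h : u =o[atTop] a) :
    atTop.limsup (fun m => ENNReal.ofReal (u m) / ENNReal.ofReal (a m)) = 0 := by
  have hlim := ENNReal.tendsto_ofReal h.tendsto_div_nhds_zero
  rw [ENNReal.ofReal_zero] at hlim
  refine (hlim.congr' ?_).limsup_eq
  filter_upwards [ha] with m hm using ENNReal.ofReal_div_of_pos hm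

theorem hasUpperTopSlowEntropy_of_isLittleO {a : ℕ → ℝ → ℝ} {E : ℝ} (hE : 0 < E)
    (ha : ∀ t, ∀ᶠ m in atTop, 0 < a m t)
    (hlow : ∀ᶠ ε in 𝓝[>] 0, ∃ c > 0, ∃ᶠ m in atTop, c * a m E ≤ bowenCoverNum T m ε)
    (hup : ∀ᶠ ε in 𝓝[>] 0, ∀ t > E,
      (fun m => (bowenCoverNum T m ε : ℝ)) =o[atTop] fun m => a m t) :
    HasUpperTopSlowEntropy T a E := by
  refine tendsto_const_nhds.congr' ?_
  filter_upwards [hlow, hup] with ε hlower hlittle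
  obtain ⟨c, hc, hfreq⟩ := hlower
  simp only [topSlowEntFun, ← ENNReal.ofReal_natCast]
  symm
  refine IsGreatest.csSup_eq ⟨⟨hE, limsup_div_ofReal_pos hc (ha E) hfreq⟩, ?_⟩
  rintro t ⟨-, ht⟩
  by_contra! hEt
  exact ht.ne' (limsup_div_ofReal_eq_zero (ha t) (hlittle t hEt))

end SlowEntropy

section Separation

theorem exists_smoothSawtooth_add_sub_eq {L : ℕ} (hL : 3 ≤ L) {w c : ℝ} (hLw : 2 / (L : ℝ) ≤ w)
    (hwL : w ≤ 1 - 2 / L) (hwc : w - 1 ≤ c) (hcw : c ≤ w) :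
    ∃ y, smoothSawtooth L (y + w) - smoothSawtooth L y = c := by
  have hL' : (0 : ℝ) < 1 / L := by positivity
  rw [show (2 : ℝ) / L = 2 * (1 / L) by ring] at hLw hwL
  have hcont : Continuous (smoothSawtooth L) :=
    (hasPolyBoundedDerivs_smoothSawtooth.1 L hL).continuous
  have hab : 1 / (L : ℝ) ≤ 1 - 1 / L := by linarith
  have hleft : smoothSawtooth L (1 / L + w) - smoothSawtooth L (1 / L) = w := by
    rw [smoothSawtooth_eq_sub_half hL (by linarith) (by linarith),
      smoothSawtooth_eq_sub_half hL le_rfl hab]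
    ring
  have hright : smoothSawtooth L (1 - 1 / L + w) - smoothSawtooth L (1 - 1 / L) = w - 1 := by
    rw [show 1 - 1 / (L : ℝ) + w = w - 1 / L + 1 by ring, smoothSawtooth_periodic L,
      smoothSawtooth_eq_sub_half hL (by linarith) (by linarith),
      smoothSawtooth_eq_sub_half hL hab le_rfl]
    ring
  obtain ⟨y, -, hy⟩ := intermediate_value_Icc' hab
    (f := fun y => smoothSawtooth L (y + w) - smoothSawtooth L y) (by fun_prop)
    (show c ∈ _ by rw [hleft, hright]; exact ⟨hwc, hcw⟩)
  exact ⟨y, hy⟩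

theorem exists_nsmul_eq_norm_sub_le {N : ℕ} (hN : 0 < N) (a b : Torus1) :
    ∃ x, N • x = b ∧ ‖x - a‖ ≤ 1 / N := by
  have hN' : (0 : ℝ) < N := by exact_mod_cast hN
  obtain ⟨a, rfl, -⟩ := exists_coe_eq_and_abs_eq_norm a
  obtain ⟨b, rfl, -⟩ := exists_coe_eq_and_abs_eq_norm b
  set k : ℤ := ⌊N * (a - b / N)⌋
  refine ⟨((b + k) / N : ℝ), ?_, ?_⟩
  · rw [← coe_natCast_mul, mul_div_cancel₀ _ hN'.ne', AddCircle.coe_add, coe_intCast, add_zero]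
  · rw [← AddCircle.coe_sub, show (b + k) / N - a = k / N - (a - b / N) by ring]
    exact (norm_coe_le_abs _).trans (abs_floor_mul_div_sub_le hN' _)

theorem dist_le_dist_add_of_dist_le {X : Type*} [PseudoMetricSpace X] {x y x' y' : X} {δ : ℝ}
    (hx : dist x' x ≤ δ) (hy : dist y' y ≤ δ) : dist x y ≤ dist x' y' + 2 * δ := by
  rw [dist_comm] at hx
  linarith [dist_triangle4 x x' y' y]

namespace AnosovKatok

variable (S : AnosovKatok) (n : ℕ)

theorem ten_le_L : 10 ≤ S.L n := by
  have h := S.N_monotone (Nat.zero_le (n + 2))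
  rw [N_zero, N_add_two] at h
  exact (Nat.pow_le_pow_iff_right (by norm_num)).1 h

theorem one_le_L_cast : (1 : ℝ) ≤ S.L n := by
  exact_mod_cast (by norm_num : 1 ≤ 10).trans (S.ten_le_L n)

-- As `y` crosses the plateau, `β (y + w) - β y` takes all values in `[w - 1, w]`, so for some `y`
-- the second coordinates of the two images differ by exactly `1 / 2`.
theorem exists_forall_exists_h_add_eq (s : Torus1) {w : ℝ} (hLw : 2 / (S.L n : ℝ) ≤ w)
    (hwL : w ≤ 1 - 2 / S.L n) : ∃ s' : Torus1, ∀ v, ∃ u, ∃ r : Torus1, ‖r‖ ≤ 1 / S.N n ∧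
      S.h n u = v + (r, 0) ∧
        S.h n (u + (s, (w : Torus1))) = v + (s', ((1 / 2 : ℝ) : Torus1)) + (r, 0) := by
  obtain ⟨σ, hσ, -⟩ := exists_coe_eq_and_abs_eq_norm (S.N n • s)
  obtain ⟨y, hy⟩ := exists_smoothSawtooth_add_sub_eq (S.three_le_L n) hLw hwL
    (c := w - Int.fract (1 / 2 - σ)) (by linarith [Int.fract_lt_one (1 / 2 - σ)])
    (by linarith [Int.fract_nonneg (1 / 2 - σ)])
  set β := smoothSawtooth (S.L n) y
  set β' := smoothSawtooth (S.L n) (y + w)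
  have hhalf : (w : Torus1) + S.N n • s - ((β' - β : ℝ) : Torus1) = ((1 / 2 : ℝ) : Torus1) := by
    rw [← hσ, hy, ← AddCircle.coe_add, ← AddCircle.coe_sub, Int.fract,
      show w + σ - (w - (1 / 2 - σ - ⌊1 / 2 - σ⌋)) = 1 / 2 - ⌊1 / 2 - σ⌋ by ring,
      AddCircle.coe_sub, coe_intCast, sub_zero]
  refine ⟨s - (((S.N n : ℝ)⁻¹ * (β' - β) : ℝ) : Torus1), fun v => ?_⟩
  obtain ⟨x, hNx, hx⟩ := exists_nsmul_eq_norm_sub_le (S.N_pos n)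
    (v.1 + (((S.N n : ℝ)⁻¹ * β : ℝ) : Torus1)) (v.2 - (y : Torus1) + (β : Torus1))
  refine ⟨(x, (y : Torus1)), _, hx, ?_, ?_⟩
  · rw [h_apply, circleSawtooth_coe, hNx]
    ext <;> simp only [Prod.fst_add, Prod.snd_add] <;> abel
  · rw [h_apply, ← hhalf, Prod.mk_add_mk, ← AddCircle.coe_add, circleSawtooth_coe, smul_add, hNx,
      mul_sub, AddCircle.coe_sub, AddCircle.coe_sub, AddCircle.coe_add]
    ext <;> simp only [Prod.fst_add, Prod.snd_add] <;> abel

/-- The distance to which `H n` separates two points at height difference `1 / 2`: every stage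
loses the error `2 * (1 / 2) ^ (n + 4)` of moving both points horizontally. -/
def separation (n : ℕ) : ℝ := 1 / 4 + 1 / 4 * (1 / 2) ^ n

theorem separation_succ : separation (n + 1) = separation n - 2 * (1 / 2) ^ (n + 4) := by
  unfold separation; ring

theorem one_fourth_le_separation : 1 / 4 ≤ separation n := by
  unfold separation
  linarith [pow_pos (one_half_pos (α := ℝ)) n]

theorem exists_separation_succ_le {s : Torus1} {w : ℝ}
    (hn : ∀ s : Torus1, ∃ v, separation n ≤
      dist (S.H n v) (S.H n (v + (s, ((1 / 2 : ℝ) : Torus1)))))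
    (hLw : 2 / (S.L n : ℝ) ≤ w) (hwL : w ≤ 1 - 2 / S.L n) :
    ∃ u, separation (n + 1) ≤ dist (S.H (n + 1) u) (S.H (n + 1) (u + (s, (w : Torus1)))) := by
  obtain ⟨s', hs'⟩ := S.exists_forall_exists_h_add_eq n s hLw hwL
  obtain ⟨v, hv⟩ := hn s'
  obtain ⟨u, r, hr, hu, hus⟩ := hs' v
  refine ⟨u, ?_⟩
  rw [H_succ, H_succ, hu, hus, separation_succ]
  linarith [dist_le_dist_add_of_dist_le (S.dist_H_add_horizontal_le_of_norm_le n v hr)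
    (S.dist_H_add_horizontal_le_of_norm_le n (v + (s', ((1 / 2 : ℝ) : Torus1))) hr)]

theorem exists_separation_le (s : Torus1) :
    ∃ v, separation n ≤ dist (S.H n v) (S.H n (v + (s, ((1 / 2 : ℝ) : Torus1)))) := by
  induction n generalizing s with
  | zero =>
    refine ⟨0, ?_⟩
    have hnorm : ‖((1 / 2 : ℝ) : Torus1)‖ = 1 / 2 := by rw [AddCircle.norm_eq]; norm_num [round_eq]
    rw [H_zero, H_zero, zero_add, dist_zero_left]
    refine le_trans ?_ (norm_snd_le _)
    rw [hnorm]
    norm_num [separation]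
  | succ n ih =>
    have hL : (10 : ℝ) ≤ S.L n := by exact_mod_cast S.ten_le_L n
    have : 2 / (S.L n : ℝ) ≤ 2 / 10 := by gcongr
    exact S.exists_separation_succ_le n ih (by linarith) (by linarith)

theorem exists_dist_limit_H_ge {w₁ w₂ : ℝ} (hLw : 2 / (S.L n : ℝ) ≤ w₂ - w₁)
    (hwL : w₂ - w₁ ≤ 1 - 2 / S.L n) :
    ∃ i < S.N (n + 2), 1 / 16 ≤ dist (S.limit i (S.H (n + 1) (0, (w₁ : Torus1))))
      (S.limit i (S.H (n + 1) (0, (w₂ : Torus1)))) := by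
  obtain ⟨v, hv⟩ := S.exists_separation_succ_le n (s := 0) (S.exists_separation_le n) hLw hwL
  obtain ⟨i, hi, happrox⟩ := S.exists_forall_dist_approx_H_add_le (n + 1) (0, (w₁ : Torus1)) v
  refine ⟨i, hi, ?_⟩
  have hpow : (1 / 2 : ℝ) ^ (n + 1 + 3) ≤ (1 / 2) ^ 4 :=
    pow_le_pow_of_le_one (by norm_num) (by norm_num) (by omega)
  have hpow' : (1 / 2 : ℝ) ^ (n + 2 + 4) ≤ (1 / 2) ^ 6 :=
    pow_le_pow_of_le_one (by norm_num) (by norm_num) (by omega)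
  have h₁ := (happrox 0).trans hpow
  have h₂ := (happrox (0, ((w₂ - w₁ : ℝ) : Torus1))).trans hpow
  rw [add_zero, add_zero] at h₁
  rw [Prod.mk_add_mk, add_zero, ← AddCircle.coe_add, add_sub_cancel] at h₂
  have hvapprox := dist_le_dist_add_of_dist_le h₁ h₂
  have hlimit := dist_le_dist_add_of_dist_le
    ((S.dist_limit_approx_le (n + 2) (S.H (n + 1) (0, (w₁ : Torus1))) hi.le).trans hpow')
    ((S.dist_limit_approx_le (n + 2) (S.H (n + 1) (0, (w₂ : Torus1))) hi.le).trans hpow')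
  linarith [one_fourth_le_separation (n + 1)]

theorem L_div_two_le_bowenCoverNum {ε : ℝ} (hε : 0 < ε) (hε' : ε ≤ 1 / 32) :
    S.L n / 2 ≤ bowenCoverNum (S.limit 1) (S.N (n + 2)) ε := by
  have hL : (10 : ℝ) ≤ S.L n := by exact_mod_cast S.ten_le_L n
  have hL' : (0 : ℝ) < S.L n := by linarith
  rw [← Finset.card_range (S.L n / 2)]
  refine card_le_bowenCoverNum (S.continuous_limit 1) hε
    (q := fun k : ℕ => S.H (n + 1) (0, ((2 * k / S.L n : ℝ) : Torus1))) fun a ha b hb hab => ?_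
  wlog hlt : a < b generalizing a b
  · obtain ⟨i, hi, hdist⟩ := this b hb a ha hab.symm (by omega)
    exact ⟨i, hi, by rwa [dist_comm]⟩
  have hstep : (a : ℝ) + 1 ≤ b := by exact_mod_cast hlt
  have htop : (2 : ℝ) * b + 2 ≤ S.L n := by
    rw [Finset.mem_range] at hb
    exact_mod_cast (by omega : 2 * b + 2 ≤ S.L n)
  obtain ⟨i, hi, hdist⟩ := S.exists_dist_limit_H_ge n
    (w₁ := 2 * a / S.L n) (w₂ := 2 * b / S.L n)
    (by rw [← sub_div]; gcongr; linarith)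
    (by
      rw [← sub_div, one_sub_div hL'.ne']
      exact div_le_div_of_nonneg_right (by linarith [Nat.cast_nonneg (α := ℝ) a]) hL'.le)
  refine ⟨i, hi, ?_⟩
  rw [iterate_limit_one, iterate_limit_one]
  linarith

end AnosovKatok

end Separation

section Covering

theorem exists_norm_sub_natCast_div_le {A : ℕ} (hA : 0 < A) (x : Torus1) :
    ∃ a < A, ‖x - ((a / A : ℝ) : Torus1)‖ ≤ 1 / A := by
  have hA' : (0 : ℝ) < A := by exact_mod_cast hA
  obtain ⟨x, rfl, -⟩ := exists_coe_eq_and_abs_eq_norm x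
  have hfract : (x : Torus1) = (Int.fract x : ℝ) := by
    rw [Int.fract, AddCircle.coe_sub, coe_intCast, sub_zero]
  have hnonneg : 0 ≤ A * Int.fract x := mul_nonneg hA'.le (Int.fract_nonneg x)
  refine ⟨⌊A * Int.fract x⌋₊, ?_, ?_⟩
  · rw [Nat.floor_lt hnonneg]
    exact mul_lt_of_lt_one_right hA' (Int.fract_lt_one x)
  · rw [hfract, ← AddCircle.coe_sub, natCast_floor_eq_intCast_floor hnonneg]
    refine (norm_coe_le_abs _).trans ?_
    rw [abs_sub_comm]
    exact abs_floor_mul_div_sub_le hA' _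

theorem natCeil_ten_mul_div_le {x ε : ℝ} (hε : 0 < ε) (hx : ε ≤ x) :
    (⌈10 * x / ε⌉₊ : ℝ) ≤ 11 * x / ε := by
  calc (⌈10 * x / ε⌉₊ : ℝ) ≤ 10 * x / ε + 1 :=
        (Nat.ceil_lt_add_one (div_nonneg (by linarith) hε.le)).le
    _ ≤ 10 * x / ε + x / ε := by gcongr; rwa [one_le_div hε]
    _ = 11 * x / ε := by ring

theorem eventually_exists_lt_mul_and_mul_succ_le {r : ℕ → ℝ} (hpos : ∀ n, 0 < r n)
    (hlim : Tendsto r atTop (𝓝 0)) {c : ℝ} (hc : 0 < c) (n₀ : ℕ) :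
    ∀ᶠ m : ℕ in atTop, ∃ n ≥ n₀, c < m * r n ∧ m * r (n + 1) ≤ c := by
  filter_upwards [(tendsto_natCast_atTop_atTop.atTop_mul_const (hpos n₀)).eventually_gt_atTop c]
    with m hm
  have hex : ∃ n, n₀ ≤ n ∧ m * r (n + 1) ≤ c := by
    have hzero : Tendsto (fun n => m * r (n + 1)) atTop (𝓝 0) := by
      simpa using ((tendsto_add_atTop_iff_nat 1).2 hlim).const_mul (m : ℝ)
    exact ((eventually_ge_atTop n₀).and (hzero.eventually (ge_mem_nhds hc))).exists
  classical
  obtain ⟨hn₀, hle⟩ := Nat.find_spec hex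
  refine ⟨Nat.find hex, hn₀, ?_, hle⟩
  obtain heq | hlt := hn₀.eq_or_lt
  · rwa [← heq]
  · have hmin := Nat.find_min hex (Nat.sub_one_lt_of_lt hlt)
    rw [Nat.sub_add_cancel (by omega), not_and, not_le] at hmin
    exact hmin (by omega)

theorem isLittleO_rpow_rpow_atTop {p q : ℝ} (h : p < q) :
    (fun x : ℝ => x ^ p) =o[atTop] fun x => x ^ q := by
  refine (Asymptotics.isLittleO_iff_tendsto' ?_).2 ?_
  · filter_upwards [eventually_gt_atTop 0] with x hx hzero
    exact absurd hzero (Real.rpow_pos_of_pos hx q).ne'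
  · refine (tendsto_rpow_neg_atTop (sub_pos.2 h)).congr' ?_
    filter_upwards [eventually_gt_atTop 0] with x hx
    rw [neg_sub, Real.rpow_sub hx]

namespace AnosovKatok

variable (S : AnosovKatok) (n : ℕ)

theorem dist_approx_H_le (i : ℤ) (u v : Torus2) :
    dist (S.approx (n + 2) i (S.H (n + 1) u)) (S.approx (n + 2) i (S.H (n + 1) v)) ≤
      S.K n * (2 * S.N n * ‖u.1 - v.1‖ + 2 * sawtoothSlope * S.L n * ‖u.2 - v.2‖) := by
  have hshear : ∀ w, dist (S.h n (u + w)) (S.h n (v + w)) ≤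
      2 * S.N n * ‖u.1 - v.1‖ + 2 * sawtoothSlope * S.L n * ‖u.2 - v.2‖ := fun w => by
    simpa only [Prod.fst_add, Prod.snd_add, add_sub_add_right_eq_sub] using!
      (S.stage n).dist_nextShear_le (S.three_le_L n) (u + w) (v + w)
  rw [approx_succ_eq, approx_succ_eq, Homeomorph.symm_apply_apply, Homeomorph.symm_apply_apply,
    H_succ, H_succ]
  exact (S.dist_H_le n _ _).trans (mul_le_mul_of_nonneg_left (hshear _) (S.K_pos n).le)

theorem bowenDist_limit_H_lt {m : ℕ} {ε : ℝ} (hε : 0 < ε) (hm : m * S.tail (n + 2) ≤ ε / 5)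
    {u v : Torus2} (hfst : S.K n * S.N n * ‖u.1 - v.1‖ ≤ ε / 10)
    (hsnd : sawtoothSlope * S.K n * S.L n * ‖u.2 - v.2‖ ≤ ε / 10) :
    bowenDist (S.limit 1) m (S.H (n + 1) u) (S.H (n + 1) v) < ε := by
  refine (bowenDist_lt_iff hε).2 fun i hi => ?_
  have hlimit : ∀ z, dist (S.approx (n + 2) i z) (S.limit i z) ≤ ε / 5 := fun z => by
    refine (S.dist_approx_limit_le (n + 2) i z).trans (le_trans ?_ hm)
    refine mul_le_mul_of_nonneg_right ?_ (S.tail_nonneg _)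
    rw [Int.cast_natCast, Nat.abs_cast]
    exact_mod_cast hi.le
  rw [iterate_limit_one, iterate_limit_one]
  linarith [S.dist_approx_H_le n i u v,
    dist_le_dist_add_of_dist_le (hlimit (S.H (n + 1) u)) (hlimit (S.H (n + 1) v))]

theorem bowenCoverNum_limit_le_mul {m A B : ℕ} {ε : ℝ} (hε : 0 < ε)
    (hm : m * S.tail (n + 2) ≤ ε / 5) (hA : 10 * (S.K n * S.N n) / ε ≤ A)
    (hB : 10 * (sawtoothSlope * S.K n * S.L n) / ε ≤ B) :
    bowenCoverNum (S.limit 1) m ε ≤ A * B := by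
  have hK := S.K_pos n
  have hN := S.N_cast_pos n
  have hL := one_pos.trans_le (S.one_le_L_cast n)
  have hc : 0 < sawtoothSlope := one_pos.trans_le one_le_sawtoothSlope
  have hA' : (0 : ℝ) < A := lt_of_lt_of_le (by positivity) hA
  have hB' : (0 : ℝ) < B := lt_of_lt_of_le (by positivity) hB
  rw [div_le_iff₀ hε] at hA hB
  classical
  let grid : ℕ × ℕ → Torus2 := fun p => S.H (n + 1) ((p.1 / A : ℝ), (p.2 / B : ℝ))
  calc bowenCoverNum (S.limit 1) m ε
      ≤ ((Finset.range A ×ˢ Finset.range B).image grid).card := bowenCoverNum_le_card fun z => ?_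
    _ ≤ (Finset.range A ×ˢ Finset.range B).card := Finset.card_image_le
    _ = A * B := by rw [Finset.card_product, Finset.card_range, Finset.card_range]
  obtain ⟨u, rfl⟩ := (S.H (n + 1)).surjective z
  obtain ⟨a, ha, hau⟩ := exists_norm_sub_natCast_div_le (by exact_mod_cast hA') u.1
  obtain ⟨b, hb, hbu⟩ := exists_norm_sub_natCast_div_le (by exact_mod_cast hB') u.2
  rw [norm_sub_rev] at hau hbu
  refine ⟨grid (a, b), Finset.mem_image_of_mem _
    (Finset.mk_mem_product (Finset.mem_range.2 ha) (Finset.mem_range.2 hb)),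
    S.bowenDist_limit_H_lt n hε hm ?_ ?_⟩
  · calc _ ≤ S.K n * S.N n * (1 / A) := by gcongr
      _ ≤ ε / 10 := by rw [mul_one_div, div_le_iff₀ hA']; linarith
  · calc _ ≤ sawtoothSlope * S.K n * S.L n * (1 / B) := by gcongr
      _ ≤ ε / 10 := by rw [mul_one_div, div_le_iff₀ hB']; linarith

theorem bowenCoverNum_limit_le {m : ℕ} {ε : ℝ} (hε : 0 < ε) (hε' : ε ≤ 1)
    (hm : m * S.tail (n + 2) ≤ ε / 5) :
    (bowenCoverNum (S.limit 1) m ε : ℝ) ≤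
      121 * sawtoothSlope / ε ^ 2 * (S.K n ^ 2 * S.N n * S.L n) := by
  have hKN : 1 ≤ S.K n * S.N n := one_le_mul_of_one_le_of_one_le (S.one_le_K n) (S.one_le_N_cast n)
  have hKL : 1 ≤ sawtoothSlope * S.K n * S.L n := one_le_mul_of_one_le_of_one_le
    (one_le_mul_of_one_le_of_one_le one_le_sawtoothSlope (S.one_le_K n)) (S.one_le_L_cast n)
  calc (bowenCoverNum (S.limit 1) m ε : ℝ)
      ≤ ⌈10 * (S.K n * S.N n) / ε⌉₊ * ⌈10 * (sawtoothSlope * S.K n * S.L n) / ε⌉₊ := by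
        exact_mod_cast S.bowenCoverNum_limit_le_mul n hε hm (Nat.le_ceil _) (Nat.le_ceil _)
    _ ≤ 11 * (S.K n * S.N n) / ε * (11 * (sawtoothSlope * S.K n * S.L n) / ε) :=
        mul_le_mul (natCeil_ten_mul_div_le hε (hε'.trans hKN))
          (natCeil_ten_mul_div_le hε (hε'.trans hKL)) (Nat.cast_nonneg _) (by positivity)
    _ = _ := by ring

theorem tail_pos : 0 < S.tail n := by
  have hterm : 0 < S.err n := by
    have := S.K_pos n
    have := S.N_cast_pos n
    have := S.N_cast_pos (n + 1)
    unfold err; positivity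
  refine hterm.trans_le ?_
  exact (S.summable_err.comp_injective (add_right_injective n)).le_tsum 0 fun _ _ => S.err_nonneg _

theorem sqrt_N_lt_of_lt_mul_tail {m : ℕ} {c : ℝ} (hc : (1 / 2) ^ (n + 4) ≤ c)
    (hm : c < m * S.tail n) : √(S.N (n + 1)) < m := by
  have hsqrt : 0 < √(S.N (n + 1) : ℝ) := Real.sqrt_pos.2 (S.N_cast_pos _)
  have hc' : 0 < c := lt_of_lt_of_le (by positivity) hc
  have hlt : c * 1 < c * (m / √(S.N (n + 1))) := by
    calc c * 1 < m * S.tail n := by rwa [mul_one]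
      _ ≤ m * (c / √(S.N (n + 1))) := by
          gcongr; exact (S.tail_le_div_sqrt n).trans (by gcongr)
      _ = c * (m / √(S.N (n + 1))) := by ring
  exact (one_lt_div hsqrt).1 (lt_of_mul_lt_mul_left hlt hc'.le)

theorem L_le_three_mul_log {m : ℕ} (hm : √(S.N (n + 2)) ≤ m) : S.L n ≤ 3 * Real.log m := by
  have hlog := Real.log_le_log (S.N_cast_pos (n + 2)) ((Real.sqrt_le_left (Nat.cast_nonneg m)).1 hm)
  rw [N_add_two, Nat.cast_pow, Real.log_pow, Real.log_pow] at hlog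
  push_cast at hlog
  nlinarith [Real.log_two_gt_d9, Nat.cast_nonneg (α := ℝ) (S.L n)]

theorem K_sq_mul_N_le_L_rpow {δ : ℝ} (hδ : 0 < δ) (hn : 1 / δ ≤ n) :
    S.K n ^ 2 * S.N n ≤ (S.L n : ℝ) ^ δ := by
  have hn' : (0 : ℝ) < n := lt_of_lt_of_le (by positivity) hn
  have hKN : 0 ≤ S.K n ^ 2 * S.N n := by positivity
  calc S.K n ^ 2 * S.N n = ((S.K n ^ 2 * S.N n) ^ n) ^ (n : ℝ)⁻¹ :=
        (Real.pow_rpow_inv_natCast hKN (by exact_mod_cast hn'.ne')).symm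
    _ ≤ (S.L n : ℝ) ^ (n : ℝ)⁻¹ :=
        Real.rpow_le_rpow (by positivity) (S.pow_le_L n) (by positivity)
    _ ≤ (S.L n : ℝ) ^ δ := by
        refine Real.rpow_le_rpow_of_exponent_le (S.one_le_L_cast n) ?_
        rwa [inv_le_comm₀ hn' hδ, ← one_div]

theorem isBigO_bowenCoverNum_limit {ε δ : ℝ} (hε : 0 < ε) (hε' : ε ≤ 1) (hδ : 0 < δ) :
    (fun m : ℕ => (bowenCoverNum (S.limit 1) m ε : ℝ)) =O[atTop]
      fun m : ℕ => Real.log m ^ (1 + δ) := by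
  obtain ⟨n₀, hδn₀, hεn₀⟩ : ∃ n₀ : ℕ, 1 / δ ≤ n₀ ∧ (1 / 2 : ℝ) ^ n₀ ≤ ε / 5 :=
    ((tendsto_natCast_atTop_atTop.eventually_ge_atTop _).and
      ((tendsto_pow_atTop_nhds_zero_of_lt_one (by norm_num) (by norm_num)).eventually
        (ge_mem_nhds (by positivity)))).exists
  refine .of_bound (121 * sawtoothSlope / ε ^ 2 * 3 ^ (1 + δ)) ?_
  filter_upwards [eventually_exists_lt_mul_and_mul_succ_le (fun n => S.tail_pos (n + 1))
    ((tendsto_add_atTop_iff_nat 1).2 S.tendsto_tail) (by positivity : 0 < ε / 5) n₀]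
    with m ⟨n, hn, hlt, hle⟩
  have hpow : (1 / 2 : ℝ) ^ (n + 1 + 4) ≤ ε / 5 :=
    (pow_le_pow_of_le_one (by norm_num) (by norm_num) (by omega)).trans hεn₀
  have hL := S.L_le_three_mul_log n (S.sqrt_N_lt_of_lt_mul_tail (n + 1) hpow hlt).le
  have hKN := S.K_sq_mul_N_le_L_rpow n hδ (hδn₀.trans (by exact_mod_cast hn))
  have hLpos := one_pos.trans_le (S.one_le_L_cast n)
  have hlog : 0 ≤ Real.log m := by linarith
  have hc : 0 ≤ sawtoothSlope := zero_le_one.trans one_le_sawtoothSlope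
  rw [Real.norm_of_nonneg (Nat.cast_nonneg _), Real.norm_of_nonneg (by positivity)]
  calc (bowenCoverNum (S.limit 1) m ε : ℝ)
      ≤ 121 * sawtoothSlope / ε ^ 2 * (S.K n ^ 2 * S.N n * S.L n) :=
        S.bowenCoverNum_limit_le n hε hε' hle
    _ ≤ 121 * sawtoothSlope / ε ^ 2 * (S.L n ^ δ * S.L n) := by gcongr
    _ = 121 * sawtoothSlope / ε ^ 2 * (S.L n : ℝ) ^ (1 + δ) := by
        rw [Real.rpow_add hLpos, Real.rpow_one, mul_comm ((S.L n : ℝ) ^ δ)]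
    _ ≤ 121 * sawtoothSlope / ε ^ 2 * (3 * Real.log m) ^ (1 + δ) := by gcongr
    _ = 121 * sawtoothSlope / ε ^ 2 * 3 ^ (1 + δ) * Real.log m ^ (1 + δ) := by
        rw [Real.mul_rpow (by norm_num) hlog, mul_assoc]

theorem isLittleO_bowenCoverNum_limit {ε t : ℝ} (hε : 0 < ε) (hε' : ε ≤ 1) (ht : 1 < t) :
    (fun m : ℕ => (bowenCoverNum (S.limit 1) m ε : ℝ)) =o[atTop] fun m : ℕ => Real.log m ^ t :=
  (S.isBigO_bowenCoverNum_limit (δ := (t - 1) / 2) hε hε' (by linarith)).trans_isLittleO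
    ((isLittleO_rpow_rpow_atTop (by linarith)).comp_tendsto
      (Real.tendsto_log_atTop.comp tendsto_natCast_atTop_atTop))

theorem frequently_log_le_bowenCoverNum_limit {ε : ℝ} (hε : 0 < ε) (hε' : ε ≤ 1 / 32) :
    ∃ᶠ m : ℕ in atTop, 1 / 4 * Real.log m ≤ bowenCoverNum (S.limit 1) m ε := by
  have hN : Tendsto (fun n => S.N (n + 2)) atTop atTop :=
    ((tendsto_add_atTop_iff_nat 2).2 (strictMono_nat_of_lt_succ fun n => by
      linarith [S.two_mul_N_le n, S.N_pos n]).tendsto_atTop)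
  refine hN.frequently (Eventually.of_forall fun n => ?_).frequently
  have hcard : (S.L n : ℝ) ≤ 4 * bowenCoverNum (S.limit 1) (S.N (n + 2)) ε := by
    have := S.L_div_two_le_bowenCoverNum n hε hε'
    have := S.ten_le_L n
    exact_mod_cast (by omega : S.L n ≤ 4 * bowenCoverNum (S.limit 1) (S.N (n + 2)) ε)
  have hlog : Real.log (S.N (n + 2)) ≤ S.L n := by
    rw [N_add_two, Nat.cast_pow, Real.log_pow]
    exact mul_le_of_le_one_right (Nat.cast_nonneg _)
      (by push_cast; linarith [Real.log_two_lt_d9])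
  linarith

theorem hasUpperTopSlowEntropy_limit : HasUpperTopSlowEntropy (S.limit 1) logScale 1 := by
  have hsmall : ∀ᶠ ε : ℝ in 𝓝[>] 0, ε ∈ Ioc 0 (1 / 32) := Ioc_mem_nhdsGT (by norm_num)
  refine hasUpperTopSlowEntropy_of_isLittleO one_pos (fun t => ?_) ?_ ?_
  · filter_upwards [eventually_gt_atTop 1] with m hm
    exact Real.rpow_pos_of_pos (Real.log_pos (by exact_mod_cast hm)) t
  · filter_upwards [hsmall] with ε hε
    refine ⟨1 / 4, by norm_num, ?_⟩
    simpa only [logScale, Real.rpow_one] using S.frequently_log_le_bowenCoverNum_limit hε.1 hε.2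
  · filter_upwards [hsmall] with ε hε t ht
    exact S.isLittleO_bowenCoverNum_limit hε.1 (hε.2.trans (by norm_num)) ht

end AnosovKatok

end Covering

end

/-- There exists a uniquely ergodic `C^∞` diffeomorphism `T` of `𝕋²` whose
unique invariant Borel probability measure is the Haar–Lebesgue measure,
measure-theoretically isomorphic to an irrational circle rotation, whose upper
topological slow entropy w.r.t. the logarithmic scale `a^{ln}_m(t) = (ln m)^t` equals `1`. -/
theorem stmt8 :
    ∃ T : Torus2 → Torus2,
      IsCkTorusDiffeo ⊤ T ∧
      UniquelyErgodicWithVolume T ∧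
      IsoToIrrationalRotation T ∧
      HasUpperTopSlowEntropy T logScale 1 := by
  obtain ⟨S⟩ := AnosovKatok.nonempty
  exact ⟨S.limit 1, S.isCkTorusDiffeo_limit, S.uniquelyErgodicWithVolume_limit,
    S.isoToIrrationalRotation_limit, S.hasUpperTopSlowEntropy_limit⟩
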